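/- Let Q and D be computable real numbers with Q > 0 and 0 < D < 1. Then the series W(Q,D) = ∑_{p ∈ dom U} |p|^Q · 2^{−|p|/D} converges, and its sum is a left-computable real number which is Chaitin D-random and D-compressible. -/

import Mathlib

open Filter

/-- A set of finite binary strings is prefix-free if no element of it is a
prefix of another (distinct) element of it. -/
def PrefixFree (S : Set (List Bool)) : Prop :=
  ∀ p ∈ S, ∀ q ∈ S, p <+: q → p = q

/-- A computer: a partial recursive function from finite binary strings to
finite binary strings whose domain is a prefix-free set. -/
structure Computer where
  f : List Bool →. List Bool
  partrec : Partrec f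
  prefixFree : PrefixFree {p | (f p).Dom}

/-- The domain of a computer. -/
def Computer.domain (C : Computer) : Set (List Bool) := {p | (C.f p).Dom}

/-- A computer `U` is optimal if every computer can be simulated on `U` with
only a constant increase in program length. -/
def IsOptimal (U : Computer) : Prop :=
  ∀ C : Computer, ∃ d : ℕ, ∀ p : List Bool, (C.f p).Dom →
    ∃ p' : List Bool, p'.length ≤ p.length + d ∧ ∀ s, s ∈ C.f p → s ∈ U.f p'

/-- Program-size complexity `H(s)`: the minimal length of a program `p`
with `U(p) = s`. -/
noncomputable def H (U : Computer) (s : List Bool) : ℕ :=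
  sInf {n | ∃ p : List Bool, p.length = n ∧ s ∈ U.f p}

/-- The `n`-th bit (`n ≥ 1`) of the base-two expansion of `x mod 1`
(the expansion chosen with infinitely many zeros). -/
noncomputable def binDigit (x : ℝ) (n : ℕ) : Bool :=
  decide (⌊Int.fract x * 2 ^ n⌋ % 2 = 1)

/-- The first `n` bits of the base-two expansion of `x mod 1` (with
infinitely many zeros). -/
noncomputable def bits (x : ℝ) (n : ℕ) : List Bool :=
  (List.range n).map fun i => binDigit x (i + 1)

/-- A real `x` is weakly Chaitin `D`-random (w.r.t. the computer `U`). -/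
def WeaklyChaitinRandom (U : Computer) (D x : ℝ) : Prop :=
  ∃ c : ℝ, ∀ n : ℕ, 1 ≤ n → D * n - c ≤ (H U (bits x n) : ℝ)

/-- A real `x` is Chaitin `D`-random (w.r.t. the computer `U`). -/
def ChaitinRandom (U : Computer) (D x : ℝ) : Prop :=
  Tendsto (fun n : ℕ => (H U (bits x n) : ℝ) - D * n) atTop atTop

/-- A real `x` is `D`-compressible (w.r.t. the computer `U`). -/
def DCompressible (U : Computer) (D x : ℝ) : Prop :=
  Filter.limsup (fun n : ℕ => (H U (bits x n) : ℝ) / n) atTop ≤ D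

/-- A computable real number. -/
def ComputableReal (T : ℝ) : Prop :=
  ∃ f : ℕ → ℚ, Computable f ∧ ∀ n : ℕ, 1 ≤ n → |T - (f n : ℝ)| < 1 / n

/-- A right-computable real number. -/
def RightComputable (T : ℝ) : Prop :=
  ∃ g : ℕ → ℚ, Computable g ∧ (∀ n, T ≤ (g n : ℝ)) ∧
    Tendsto (fun n => ((g n : ℚ) : ℝ)) atTop (nhds T)

/-- A left-computable real number. -/
def LeftComputable (T : ℝ) : Prop := RightComputable (-T)

/-- The term `2 ^ (-|p| / T)` of the partition function `Z(T)`. -/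
noncomputable def zterm (U : Computer) (T : ℝ) (p : U.domain) : ℝ :=
  (2 : ℝ) ^ (-((p : List Bool).length : ℝ) / T)

/-- The term `|p| ^ Q * 2 ^ (-|p| / T)` of `W(Q,T)`. -/
noncomputable def wterm (U : Computer) (Q T : ℝ) (p : U.domain) : ℝ :=
  ((p : List Bool).length : ℝ) ^ Q * (2 : ℝ) ^ (-((p : List Bool).length : ℝ) / T)

/-- The term `|p| * 2 ^ (-|p| / T)` of `W(1,T)`. -/
noncomputable def wlterm (U : Computer) (T : ℝ) (p : U.domain) : ℝ :=
  ((p : List Bool).length : ℝ) * (2 : ℝ) ^ (-((p : List Bool).length : ℝ) / T)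

/-- The term `|p| ^ 2 * 2 ^ (-|p| / T)` of `W(2,T)`. -/
noncomputable def wsqterm (U : Computer) (T : ℝ) (p : U.domain) : ℝ :=
  ((p : List Bool).length : ℝ) ^ 2 * (2 : ℝ) ^ (-((p : List Bool).length : ℝ) / T)

/-- A lower-computable function `f : ℕ⁺ → [0,∞)` (represented on `ℕ`,
with all conditions imposed on positive arguments). -/
def LowerComputableFun (f : ℕ → ℝ) : Prop :=
  ∃ a : ℕ → ℕ → ℚ, Computable₂ a ∧
    (∀ k n : ℕ, 1 ≤ k → 1 ≤ n → (a k n : ℝ) ≤ f n) ∧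
    (∀ n : ℕ, 1 ≤ n → Tendsto (fun k => ((a k n : ℚ) : ℝ)) atTop (nhds (f n)))

/-- A lower-computable semi-measure on finite binary strings. -/
def LowerComputableSemiMeasure (r : List Bool → ℝ) : Prop :=
  (∀ s, 0 ≤ r s) ∧ (∀ s, r s ≤ 1) ∧ Summable r ∧ (∑' s, r s) ≤ 1 ∧
    ∃ f : ℕ → List Bool → ℚ, Computable₂ f ∧
      (∀ n s, ((f n s : ℚ) : ℝ) ≤ r s) ∧
      (∀ s, Tendsto (fun n => ((f n s : ℚ) : ℝ)) atTop (nhds (r s)))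

/-- A universal probability. -/
def UniversalProbability (m : List Bool → ℝ) : Prop :=
  LowerComputableSemiMeasure m ∧
    ∀ r : List Bool → ℝ, LowerComputableSemiMeasure r →
      ∃ c : ℝ, 0 < c ∧ ∀ s, c * r s ≤ m s


theorem comp_search {α : Type*} [Primcodable α] {R : α → ℕ → Bool} (hR : Computable₂ R)
    (hex : ∀ a, ∃ n, R a n = true) :
    ∃ f : α → ℕ, Computable f ∧ (∀ a, R a (f a) = true) ∧ ∀ a, ∀ m < f a, R a m = false := by
  classical
  refine ⟨fun a => Nat.find (hex a), ?_, fun a => Nat.find_spec (hex a), fun a m hm => by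
    simpa using Nat.find_min (hex a) hm⟩
  have h1 : Partrec fun a => Nat.rfind (fun n => Part.some (R a n)) := Partrec.rfind hR
  refine h1.of_eq_tot fun a => ?_
  refine Nat.mem_rfind.2 ⟨?_, fun {m} hm => ?_⟩
  · have h := Nat.find_spec (hex a)
    exact Part.mem_some_iff.2 h.symm
  · have h := Nat.find_min (hex a) hm
    exact Part.mem_some_iff.2 (by simpa using h)

theorem comp_search_unique {α : Type*} [Primcodable α] {R : α → ℕ → Bool} (hR : Computable₂ R)
    (f : α → ℕ) (h1 : ∀ a, R a (f a) = true) (h2 : ∀ a, ∀ m < f a, R a m = false) :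
    Computable f := by
  obtain ⟨g, hg, hg1, hg2⟩ := comp_search hR (fun a => ⟨f a, h1 a⟩)
  have : g = f := by
    funext a
    rcases lt_trichotomy (g a) (f a) with h | h | h
    · have := h2 a _ h; simp [hg1] at this
    · exact h
    · have := hg2 a _ h; simp [h1] at this
  exact this ▸ hg

theorem primrec_coprime : PrimrecRel (fun a b : ℕ => Nat.Coprime a b) := by
  have h : PrimrecRel (fun (L : List ℕ) (p : ℕ × ℕ) => ∃ d ∈ L, (2 ≤ d ∧ p.1 % d = 0) ∧ p.2 % d = 0) := by
    apply PrimrecRel.exists_mem_list (R := fun d (p : ℕ × ℕ) => (2 ≤ d ∧ p.1 % d = 0) ∧ p.2 % d = 0)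
    refine PrimrecPred.and (PrimrecPred.and ?_ ?_) ?_
    · exact Primrec.nat_le.comp (Primrec.const 2) Primrec.fst
    · exact Primrec.eq.comp (Primrec.nat_mod.comp (Primrec.fst.comp Primrec.snd) Primrec.fst)
        (Primrec.const 0)
    · exact Primrec.eq.comp (Primrec.nat_mod.comp (Primrec.snd.comp Primrec.snd) Primrec.fst)
        (Primrec.const 0)
  have h2 : PrimrecRel (fun a b : ℕ => ¬ (∃ d ∈ List.range (a + b + 3), (2 ≤ d ∧ a % d = 0) ∧ b % d = 0)) := by
    apply PrimrecPred.not
    exact h.comp (Primrec.list_range.comp (Primrec.nat_add.comp (Primrec.nat_add.comp Primrec.fst Primrec.snd) (Primrec.const 3)))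
      (Primrec.pair Primrec.fst Primrec.snd)
  refine h2.of_eq fun a b => ?_
  simp only [List.mem_range]
  constructor
  · intro h
    by_contra hc
    obtain ⟨p, hp, ha, hb⟩ := Nat.Prime.not_coprime_iff_dvd.1 hc
    apply h
    by_cases h0 : a = 0
    · by_cases h1 : b = 0
      · exact ⟨2, by omega, ⟨le_refl _, by simp [h0]⟩, by simp [h1]⟩
      · have := Nat.le_of_dvd (by omega) hb
        exact ⟨p, by omega, ⟨hp.two_le, Nat.mod_eq_zero_of_dvd ha⟩, Nat.mod_eq_zero_of_dvd hb⟩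
    · have := Nat.le_of_dvd (by omega) ha
      exact ⟨p, by omega, ⟨hp.two_le, Nat.mod_eq_zero_of_dvd ha⟩, Nat.mod_eq_zero_of_dvd hb⟩
  · rintro hc ⟨d, -, ⟨h2, ha⟩, hb⟩
    have := Nat.dvd_gcd (Nat.dvd_of_mod_eq_zero ha) (Nat.dvd_of_mod_eq_zero hb)
    rw [hc] at this
    have := Nat.le_of_dvd one_pos this
    omega

/-- structural code of a rational -/
def ratCode (q : ℚ) : ℕ := @Encodable.encode ℚ Rat.instEncodable q

theorem encode_int (z : ℤ) : Encodable.encode z = if 0 ≤ z then 2 * z.natAbs else 2 * z.natAbs - 1 := by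
  cases z with
  | ofNat n => simp [Encodable.encode, Equiv.intEquivNat, Equiv.intEquivNatSumNat]; rfl
  | negSucc n => 
    simp [Encodable.encode, Equiv.intEquivNat, Equiv.intEquivNatSumNat]; rfl

theorem ratCode_eq (q : ℚ) : ratCode q = Nat.pair (Encodable.encode q.num) q.den := by
  rfl

theorem mem_ratCode (x : ℕ) : x ∈ Set.range ratCode ↔
    0 < x.unpair.2 ∧ Nat.Coprime ((x.unpair.1 + 1) / 2) x.unpair.2 := by
  constructor
  · rintro ⟨q, rfl⟩
    rw [ratCode_eq]
    simp only [Nat.unpair_pair]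
    refine ⟨q.den_pos, ?_⟩
    have := q.reduced
    convert this using 1
    rw [encode_int]
    split_ifs <;> omega
  · rintro ⟨h1, h2⟩
    have key : (Denumerable.ofNat ℤ x.unpair.1).natAbs = (x.unpair.1 + 1) / 2 := by
      have := encode_int (Denumerable.ofNat ℤ x.unpair.1)
      rw [Denumerable.encode_ofNat] at this
      split_ifs at this <;> omega
    refine ⟨⟨Denumerable.ofNat ℤ x.unpair.1, x.unpair.2, h1.ne', ?_⟩, ?_⟩
    · rw [key]; exact h2
    · rw [ratCode_eq]; simp only [Denumerable.encode_ofNat, Nat.pair_unpair]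

theorem ratCode_lt (n : ℕ) : ratCode (Denumerable.ofNat ℚ n) < ratCode (Denumerable.ofNat ℚ (n+1)) ∧
    ∀ x ∈ Set.range ratCode, ratCode (Denumerable.ofNat ℚ n) < x → ratCode (Denumerable.ofNat ℚ (n+1)) ≤ x := by
  let _ := @Encodable.decidableRangeEncode ℚ _
  let _ : Infinite (Set.range (@Encodable.encode ℚ _)) :=
    Infinite.of_injective _ (Equiv.ofInjective _ Encodable.encode_injective).injective
  have key : ∀ n, ratCode (Denumerable.ofNat ℚ n) =
      (Nat.Subtype.ofNat (Set.range (@Encodable.encode ℚ _)) n : ℕ) := by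
    intro n
    have : (Encodable.equivRangeEncode ℚ) (Denumerable.ofNat ℚ n) =
        (Nat.Subtype.ofNat (Set.range (@Encodable.encode ℚ _)) n) := by
      rw [← Equiv.eq_symm_apply]
      rfl
    rw [← this]
    rfl
  rw [key, key]
  refine ⟨Nat.Subtype.lt_succ_self _, fun x hx hlt => ?_⟩
  exact Nat.Subtype.succ_le_of_lt (s := Set.range (@Encodable.encode ℚ _)) (x := ⟨x, hx⟩) (y := Nat.Subtype.ofNat (Set.range (@Encodable.encode ℚ _)) n) hlt

theorem computable_ratCode_ofNat : Computable (fun n => ratCode (Denumerable.ofNat ℚ n)) := by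
  classical
  let mem : ℕ → Bool := fun x => decide (0 < x.unpair.2 ∧ Nat.Coprime ((x.unpair.1 + 1) / 2) x.unpair.2)
  have hmem : Primrec mem := by
    apply PrimrecPred.decide
    refine PrimrecPred.and ?_ ?_
    · exact Primrec.nat_lt.comp (Primrec.const 0) (Primrec.snd.comp Primrec.unpair)
    · exact primrec_coprime.comp (Primrec.nat_div.comp (Primrec.nat_add.comp (Primrec.fst.comp Primrec.unpair) (Primrec.const 1)) (Primrec.const 2)) (Primrec.snd.comp Primrec.unpair)
  have memiff : ∀ x, mem x = true ↔ x ∈ Set.range ratCode := by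
    intro x; rw [mem_ratCode]; simp [mem]
  let R : ℕ → ℕ → Bool := fun y x => decide (y < x) && mem x
  have hR : Computable₂ R := by
    apply Primrec.to_comp
    exact Primrec.and.comp (Primrec.nat_lt.decide.comp Primrec.fst Primrec.snd) (hmem.comp Primrec.snd)
  have hex : ∀ a, ∃ n, R a n = true := by
    intro a
    have h : ∀ n, n ≤ ratCode (Denumerable.ofNat ℚ n) := by
      intro n
      induction n with
      | zero => omega
      | succ n ih => have := (ratCode_lt n).1; omega
    refine ⟨ratCode (Denumerable.ofNat ℚ (a+1)), ?_⟩
    have := h (a+1)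
    simp only [R, Bool.and_eq_true, decide_eq_true_eq, memiff]
    exact ⟨by omega, _, rfl⟩
  obtain ⟨s, hs, hs1, hs2⟩ := comp_search hR hex
  have hstep : ∀ n, ratCode (Denumerable.ofNat ℚ (n+1)) = s (ratCode (Denumerable.ofNat ℚ n)) := by
    intro n
    have h1 := hs1 (ratCode (Denumerable.ofNat ℚ n))
    simp only [R, Bool.and_eq_true, decide_eq_true_eq, memiff] at h1
    have h2 := (ratCode_lt n).2 _ h1.2 h1.1
    by_contra hne
    have h3 := hs2 (ratCode (Denumerable.ofNat ℚ n)) _ (lt_of_le_of_ne h2 hne)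
    have h4 : R (ratCode (Denumerable.ofNat ℚ n)) (ratCode (Denumerable.ofNat ℚ (n+1))) = true := by
      simp only [R, Bool.and_eq_true, decide_eq_true_eq, memiff]
      exact ⟨(ratCode_lt n).1, _, rfl⟩
    rw [h4] at h3; exact absurd h3 (by decide)
  have : Computable (fun n : ℕ => Nat.rec (motive := fun _ => ℕ) (ratCode (Denumerable.ofNat ℚ 0)) (fun _ IH => s IH) n) :=
    Computable.nat_rec Computable.id (Computable.const _) (Computable.to₂ (hs.comp (Computable.snd.comp Computable.snd)))
  refine this.of_eq fun n => ?_
  induction n with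
  | zero => rfl
  | succ n ih => rw [hstep, ← ih]

theorem computable_ratCode : Computable ratCode := by
  have : Computable (fun q : ℚ => ratCode (Denumerable.ofNat ℚ (@Encodable.encode ℚ (Primcodable.toEncodable) q))) :=
    computable_ratCode_ofNat.comp Computable.encode
  refine this.of_eq fun q => ?_
  congr 1
  exact Denumerable.ofNat_encode q

/-- positive part of the numerator, in terms of code -/
theorem computable_num_toNat : Computable (fun q : ℚ => q.num.toNat) := by
  have h : Primrec (fun x : ℕ => if x.unpair.1 % 2 = 0 then x.unpair.1 / 2 else 0) := by
    refine Primrec.ite (Primrec.eq.comp (Primrec.nat_mod.comp (Primrec.fst.comp Primrec.unpair) (Primrec.const 2)) (Primrec.const 0)) (Primrec.nat_div.comp (Primrec.fst.comp Primrec.unpair) (Primrec.const 2)) (Primrec.const 0)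
  refine (h.to_comp.comp computable_ratCode).of_eq fun q => ?_
  rw [ratCode_eq, Nat.unpair_pair, encode_int]
  simp only
  split_ifs <;> omega

theorem computable_neg_num_toNat : Computable (fun q : ℚ => (-q.num).toNat) := by
  have h : Primrec (fun x : ℕ => if x.unpair.1 % 2 = 0 then 0 else (x.unpair.1 + 1) / 2) := by
    refine Primrec.ite (Primrec.eq.comp (Primrec.nat_mod.comp (Primrec.fst.comp Primrec.unpair) (Primrec.const 2)) (Primrec.const 0)) (Primrec.const 0) (Primrec.nat_div.comp (Primrec.succ.comp (Primrec.fst.comp Primrec.unpair)) (Primrec.const 2))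
  refine (h.to_comp.comp computable_ratCode).of_eq fun q => ?_
  rw [ratCode_eq, Nat.unpair_pair, encode_int]
  simp only
  split_ifs <;> omega

theorem computable_den : Computable (fun q : ℚ => q.den) := by
  refine ((Primrec.snd.comp Primrec.unpair).to_comp.comp computable_ratCode).of_eq fun q => ?_
  rw [ratCode_eq, Nat.unpair_pair]

theorem computable_rat_mk {a b c : ℕ → ℕ} (ha : Computable a) (hb : Computable b) (hc : Computable c)
    (hc0 : ∀ n, 0 < c n) : Computable (fun n => ((a n : ℚ) - b n) / c n) := by
  let P : ℕ → ℕ := fun m => (Denumerable.ofNat ℚ m).num.toNat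
  let N : ℕ → ℕ := fun m => (-(Denumerable.ofNat ℚ m).num).toNat
  let d : ℕ → ℕ := fun m => (Denumerable.ofNat ℚ m).den
  have hP : Computable P := computable_num_toNat.comp (Computable.ofNat ℚ)
  have hN : Computable N := computable_neg_num_toNat.comp (Computable.ofNat ℚ)
  have hd : Computable d := computable_den.comp (Computable.ofNat ℚ)
  let R : ℕ → ℕ → Bool := fun n m => decide (P m * c n + b n * d m = a n * d m + N m * c n)
  have Ra : Computable₂ (fun x y : ℕ => x * y) := Primrec.nat_mul.to_comp
  have Rb : Computable₂ (fun x y : ℕ => x + y) := Primrec.nat_add.to_comp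
  have hR : Computable₂ R := by
    have e : Computable₂ (fun x y : ℕ => decide (x = y)) := (Primrec.eq (α := ℕ)).decide.to_comp
    exact e.comp (Rb.comp (Ra.comp (hP.comp Computable.snd) (hc.comp Computable.fst))
        (Ra.comp (hb.comp Computable.fst) (hd.comp Computable.snd)))
      (Rb.comp (Ra.comp (ha.comp Computable.fst) (hd.comp Computable.snd))
        (Ra.comp (hN.comp Computable.snd) (hc.comp Computable.fst)))
  have hRiff : ∀ n m, R n m = true ↔ Denumerable.ofNat ℚ m = ((a n : ℚ) - b n) / c n := by
    intro n m
    set q := Denumerable.ofNat ℚ m with hq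
    have hcn : (c n : ℚ) ≠ 0 := by exact_mod_cast (hc0 n).ne'
    have hdn : (q.den : ℚ) ≠ 0 := by exact_mod_cast q.den_pos.ne'
    have h1 : (q.num : ℚ) = (q.num.toNat : ℚ) - ((-q.num).toNat : ℚ) := by
      have : q.num = (q.num.toNat : ℤ) - ((-q.num).toNat : ℤ) := by omega
      exact_mod_cast this
    have h2 : q = ((q.num.toNat : ℚ) - ((-q.num).toNat : ℚ)) / q.den := by
      rw [← h1]; exact (Rat.num_div_den q).symm
    have h3 : R n m = true ↔ (q.num.toNat * c n + b n * q.den : ℚ) = a n * q.den + (-q.num).toNat * c n := by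
      simp only [R, P, N, d, decide_eq_true_eq, ← hq]
      exact_mod_cast Iff.rfl
    have h4 : q = ((a n : ℚ) - b n) / c n ↔ ((q.num.toNat : ℚ) - ((-q.num).toNat : ℚ)) / q.den = ((a n : ℚ) - b n) / c n := by
      rw [← h2]
    rw [h3, h4, div_eq_div_iff hdn hcn]
    constructor <;> intro h <;> linarith
  obtain ⟨f, hf, hf1, -⟩ := comp_search hR (fun n => ⟨@Encodable.encode ℚ (Denumerable.toEncodable) (((a n : ℚ) - b n) / c n), by rw [hRiff, Denumerable.ofNat_encode]⟩)
  refine ((Computable.ofNat ℚ).comp hf).of_eq fun n => ?_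
  exact (hRiff n _).1 (hf1 n)


theorem prim_pow : Primrec₂ (fun a b : ℕ => a ^ b) := Primrec₂.unpaired'.1 Nat.Primrec.pow
theorem cpow {α : Type*} [Primcodable α] {f g : α → ℕ} (hf : Computable f) (hg : Computable g) :
    Computable (fun a => f a ^ g a) := (prim_pow.to_comp).comp hf hg
theorem cmul {α : Type*} [Primcodable α] {f g : α → ℕ} (hf : Computable f) (hg : Computable g) :
    Computable (fun a => f a * g a) := (Primrec.nat_mul.to_comp).comp hf hg
theorem cadd {α : Type*} [Primcodable α] {f g : α → ℕ} (hf : Computable f) (hg : Computable g) :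
    Computable (fun a => f a + g a) := (Primrec.nat_add.to_comp).comp hf hg
theorem csub {α : Type*} [Primcodable α] {f g : α → ℕ} (hf : Computable f) (hg : Computable g) :
    Computable (fun a => f a - g a) := (Primrec.nat_sub.to_comp).comp hf hg
theorem cdiv {α : Type*} [Primcodable α] {f g : α → ℕ} (hf : Computable f) (hg : Computable g) :
    Computable (fun a => f a / g a) := (Primrec.nat_div.to_comp).comp hf hg
theorem clt {α : Type*} [Primcodable α] {f g : α → ℕ} (hf : Computable f) (hg : Computable g) :
    Computable (fun a => decide (f a < g a)) := (Primrec.nat_lt.decide.to_comp).comp hf hg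
theorem cle {α : Type*} [Primcodable α] {f g : α → ℕ} (hf : Computable f) (hg : Computable g) :
    Computable (fun a => decide (f a ≤ g a)) := (Primrec.nat_le.decide.to_comp).comp hf hg
theorem ceq {α : Type*} [Primcodable α] {f g : α → ℕ} (hf : Computable f) (hg : Computable g) :
    Computable (fun a => decide (f a = g a)) := ((Primrec.eq (α := ℕ)).decide.to_comp).comp hf hg
theorem cand {α : Type*} [Primcodable α] {f g : α → Bool} (hf : Computable f) (hg : Computable g) :
    Computable (fun a => f a && g a) := (Primrec.and.to_comp).comp hf hg

theorem approx_nat {Q : ℝ} (hQ : 0 < Q) (hc : ComputableReal Q) :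
    ∃ a : ℕ → ℕ, Computable a ∧ ∀ N : ℕ, |(a N : ℝ) - N * Q| ≤ 2 := by
  obtain ⟨f, hf, hf1⟩ := hc
  refine ⟨fun N => N * (f (N+1)).num.toNat / (f (N+1)).den, ?_, fun N => ?_⟩
  · have h1 : Computable (fun N => f (N+1)) := hf.comp Computable.succ
    exact cdiv (cmul Computable.id (computable_num_toNat.comp h1)) (computable_den.comp h1)
  · have h := hf1 (N+1) (by omega)
    set q := f (N+1) with hq
    have hd : (0:ℝ) < q.den := by exact_mod_cast q.den_pos
    have h1 : ((q.num.toNat : ℝ) / q.den) = max (q : ℝ) 0 := by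
      have : (q:ℝ) = q.num / q.den := by exact_mod_cast (Rat.num_div_den q).symm
      rw [this]
      rcases le_total 0 q.num with h0 | h0
      · have e : ((q.num.toNat : ℤ) : ℝ) = q.num := by rw [Int.toNat_of_nonneg h0]
        rw [max_eq_left (div_nonneg (by exact_mod_cast h0) hd.le), ← e, Int.cast_natCast]
      · rw [Int.toNat_of_nonpos h0, max_eq_right (div_nonpos_of_nonpos_of_nonneg (by exact_mod_cast h0) hd.le)]; simp
    have h2 : |(q.num.toNat : ℝ) / q.den - Q| ≤ 1 / (N + 1) := by
      rw [h1]
      rw [abs_lt] at h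
      push_cast at h
      rw [abs_le]
      have hN : (0:ℝ) < 1 / (N + 1) := by positivity
      constructor
      · have := le_max_left (q:ℝ) 0; linarith
      · rcases max_cases (q:ℝ) 0 with ⟨e, _⟩ | ⟨e, _⟩ <;> rw [e] <;> linarith
    have h3 : |(N : ℝ) * ((q.num.toNat : ℝ) / q.den) - N * Q| ≤ 1 := by
      rw [← mul_sub, abs_mul, Nat.abs_cast]
      calc (N:ℝ) * _ ≤ N * (1 / (N+1)) := by gcongr
        _ ≤ 1 := by rw [mul_one_div, div_le_one (by positivity)]; linarith
    have h4 : ((N * q.num.toNat / q.den : ℕ) : ℝ) = ⌊(N : ℝ) * ((q.num.toNat : ℝ) / q.den)⌋₊ := by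
      rw [← Nat.floor_div_eq_div (K := ℝ)]; push_cast; rw [mul_div_assoc]
    rw [h4]
    have h5 := Nat.floor_le (a := (N : ℝ) * ((q.num.toNat : ℝ) / q.den)) (by positivity)
    have h6 := Nat.lt_floor_add_one ((N : ℝ) * ((q.num.toNat : ℝ) / q.den))
    rw [abs_le] at h3 ⊢
    constructor <;> linarith [h3.1, h3.2]

theorem approx_inv {D : ℝ} (hD : 0 < D) {d : ℕ → ℕ} (hd : Computable d)
    (h : ∀ N : ℕ, |(d N : ℝ) - N * D| ≤ 2) :
    ∃ a : ℕ → ℕ, Computable a ∧ ∀ N : ℕ, |(a N : ℝ) - N / D| ≤ 2 := by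
  obtain ⟨c, hc⟩ := exists_nat_gt ((3 + 2 * D) / D ^ 2)
  rw [div_lt_iff₀ (by positivity)] at hc
  refine ⟨fun N => N * (c * (N+1)) / d (c * (N+1)), ?_, fun N => ?_⟩
  · have : Computable (fun N => c * (N+1)) := cmul (Computable.const c) Computable.succ
    exact cdiv (cmul Computable.id this) (hd.comp this)
  · set M := c * (N+1) with hM
    have h1 := h M
    rw [abs_le] at h1
    have hMr : (M:ℝ) = c * (N+1) := by rw [hM]; push_cast; ring
    have hN : (0:ℝ) ≤ N := Nat.cast_nonneg N
    have h2 : 2 * N + 3 ≤ D * (M * D - 2) := by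
      rw [hMr]
      nlinarith
    have h3 : D * (M * D - 2) ≤ D * d M := by
      apply mul_le_mul_of_nonneg_left _ hD.le; linarith
    have hdp : (0:ℝ) < d M := by
      by_contra hcon
      have : D * d M ≤ 0 := mul_nonpos_of_nonneg_of_nonpos hD.le (not_lt.1 hcon)
      linarith
    have h4 : |((N:ℝ) * M / d M) - N / D| ≤ 1 := by
      have : ((N:ℝ) * M / d M) - N / D = N * (M * D - d M) / (D * d M) := by
        field_simp
      rw [this, abs_div, abs_of_pos (a := D * d M) (by positivity), div_le_one (by positivity), abs_mul, Nat.abs_cast]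
      have : |(M:ℝ) * D - d M| ≤ 2 := by rw [abs_sub_comm]; exact h M
      nlinarith
    have h4' : ((N * M / d M : ℕ) : ℝ) = ⌊(N : ℝ) * M / d M⌋₊ := by
      rw [← Nat.floor_div_eq_div (K := ℝ)]; push_cast; rfl
    simp only
    rw [h4']
    have h5 := Nat.floor_le (a := (N : ℝ) * M / d M) (by positivity)
    have h6 := Nat.lt_floor_add_one ((N : ℝ) * M / d M)
    rw [abs_le] at h4 ⊢
    constructor <;> linarith [h4.1, h4.2]

/-- term as function of length -/
noncomputable def tt (Q D : ℝ) (l : ℕ) : ℝ := (l:ℝ) ^ Q * (2:ℝ) ^ (-(l:ℝ) / D)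

theorem tau_arith {x B : ℝ} {N : ℕ} {a : ℕ} {K : ℝ} (hx : 0 < x) (hB : 0 < B)
    (hK : 0 < K) (hN : (N:ℝ) = B * K) (hxK : x ≤ K)
    (h1 : (a:ℝ) ^ N ≤ x ^ N * B) (h2 : x ^ N ≤ B * (a+1) ^ N) : |(a:ℝ) - x| ≤ 2 := by
  have hN0 : N ≠ 0 := by
    rintro rfl
    have : B * K > 0 := by positivity
    simp at hN; rcases hN with h | h <;> linarith
  have hu : B ≤ (1 + 1 / K) ^ N := by
    have := one_add_mul_le_pow (a := 1 / K) (by have : 0 < 1 / K := by positivity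
                                                linarith) N
    rw [hN] at this
    have e : B * K * (1 / K) = B := by field_simp
    rw [e] at this; linarith
  have hd : x * (1 / K) ≤ 1 := by rw [mul_one_div, div_le_one hK]; exact hxK
  have hKp : 0 < 1 / K := by positivity
  have h3 : (a:ℝ) ≤ x * (1 + 1 / K) := by
    refine le_of_pow_le_pow_left₀ hN0 (by positivity) ?_
    rw [mul_pow]
    exact h1.trans (by gcongr)
  have h4 : x ≤ (a+1) * (1 + 1 / K) := by
    refine le_of_pow_le_pow_left₀ hN0 (by positivity) ?_
    rw [mul_pow, mul_comm]
    exact h2.trans (by gcongr)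
  rw [abs_le]
  constructor
  · by_contra hcon
    have : (a:ℝ) + 1 < x - 1 := by linarith
    nlinarith
  · nlinarith

theorem exists_tau {Q D : ℝ} (hQ : 0 < Q) (hQc : ComputableReal Q) (hD : 0 < D)
    (hDc : ComputableReal D) (C : ℕ) (hC : ∀ l, tt Q D l ≤ C) :
    ∃ τ : ℕ → ℕ → ℕ, Computable₂ τ ∧ ∀ k l, 1 ≤ l → |(τ k l : ℝ) - 4 ^ k * tt Q D l| ≤ 2 := by
  obtain ⟨A, hA, hA1⟩ := approx_nat hQ hQc
  obtain ⟨d, hd, hd1⟩ := approx_nat hD hDc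
  obtain ⟨E, hE, hE1⟩ := approx_inv hD hd hd1
  let N : ℕ × ℕ → ℕ := fun p => 2 ^ (4 * p.2) * (4 ^ p.1 * (C + 1))
  have hN : Computable N := cmul (cpow (Computable.const 2) (cmul (Computable.const 4) Computable.snd))
    (cmul (cpow (Computable.const 4) Computable.fst) (Computable.const _))
  let R : ℕ × ℕ → ℕ → Bool := fun p a =>
    decide (4 ^ (p.1 * N p) * p.2 ^ A (N p) < (a+1) ^ N p * 2 ^ (p.2 * E (N p)))
  have f1 : Computable (fun x : (ℕ × ℕ) × ℕ => x.1) := Computable.fst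
  have f2 : Computable (fun x : (ℕ × ℕ) × ℕ => x.1.1) := Computable.fst.comp Computable.fst
  have f3 : Computable (fun x : (ℕ × ℕ) × ℕ => x.1.2) := Computable.snd.comp Computable.fst
  have f4 : Computable (fun x : (ℕ × ℕ) × ℕ => N x.1) := hN.comp f1
  have hR : Computable₂ R := clt (cmul (cpow (Computable.const 4) (cmul f2 f4)) (cpow f3 (hA.comp f4)))
    (cmul (cpow (Computable.succ.comp Computable.snd) f4) (cpow (Computable.const 2) (cmul f3 (hE.comp f4))))
  have hNpos : ∀ p, 0 < N p := fun p => by simp only [N]; positivity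
  have hex : ∀ p, ∃ a, R p a = true := by
    intro p
    refine ⟨4 ^ (p.1 * N p) * p.2 ^ A (N p), ?_⟩
    simp only [R, decide_eq_true_eq]
    set y := 4 ^ (p.1 * N p) * p.2 ^ A (N p)
    calc y < y + 1 := by omega
      _ ≤ (y+1) ^ N p := Nat.le_self_pow (hNpos p).ne' _
      _ ≤ _ := Nat.le_mul_of_pos_right _ (by positivity)
  obtain ⟨f, hf, hf1, hf2⟩ := comp_search hR hex
  refine ⟨fun k l => f (k, l), hf, fun k l hl => ?_⟩
  have g1 := hf1 (k, l)
  have g2 := hf2 (k, l)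
  set a := f (k, l)
  set n := N (k, l) with hn
  have hnpos : 0 < n := hNpos _
  simp only [R, decide_eq_true_eq, decide_eq_false_iff_not, not_lt, ← hn] at g1 g2
  have g3 : a ^ n * 2 ^ (l * E n) ≤ 4 ^ (k * n) * l ^ A n := by
    rcases Nat.eq_zero_or_pos a with h | h
    · rw [h, zero_pow hnpos.ne']; simp
    · have := g2 (a - 1) (by omega)
      rwa [Nat.sub_add_cancel h] at this
  have g1r : (4:ℝ) ^ (k * n) * l ^ A n < (a+1) ^ n * 2 ^ (l * E n) := by exact_mod_cast g1
  have g3r : (a:ℝ) ^ n * 2 ^ (l * E n) ≤ 4 ^ (k * n) * l ^ A n := by exact_mod_cast g3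
  have hl1 : (1:ℝ) ≤ l := by exact_mod_cast hl
  have hl0 : (0:ℝ) < l := by linarith
  have hll : (l:ℝ) ≤ 2 ^ (l:ℝ) := by
    rw [Real.rpow_natCast]; exact_mod_cast Nat.lt_two_pow_self.le
  have hll2 : (l:ℝ) ^ (2:ℝ) ≤ 2 ^ (2 * (l:ℝ)) := by
    rw [mul_comm, Real.rpow_mul (by norm_num)]
    exact Real.rpow_le_rpow hl0.le hll (by norm_num)
  have hAn := abs_le.1 (hA1 n)
  have hEn := abs_le.1 (hE1 n)
  have hx : 0 < 4 ^ k * tt Q D l := by unfold tt; positivity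
  have hxn : (4 ^ k * tt Q D l) ^ n = 4 ^ (k * n) * ((l:ℝ) ^ (n * Q) * 2 ^ (-(l * (n / D)) : ℝ)) := by
    unfold tt
    rw [mul_pow, mul_pow, ← pow_mul, ← Real.rpow_natCast ((l:ℝ) ^ Q), ← Real.rpow_mul hl0.le,
      ← Real.rpow_natCast ((2:ℝ) ^ (_:ℝ)), ← Real.rpow_mul (by norm_num)]
    congr 3
    · ring
    · ring
  have hAr : (l:ℝ) ^ A n = (l:ℝ) ^ (A n : ℝ) := (Real.rpow_natCast _ _).symm
  have hEr : (2:ℝ) ^ (l * E n) = (2:ℝ) ^ ((l:ℝ) * (E n : ℝ)) := by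
    rw [← Nat.cast_mul, Real.rpow_natCast]
  have hB : ((2:ℝ) ^ (4 * l)) = 2 ^ (2 * (l:ℝ)) * 2 ^ (2 * (l:ℝ)) := by
    rw [← Real.rpow_add (by norm_num), ← Real.rpow_natCast]; congr 1; push_cast; ring
  have up : (4:ℝ) ^ (k * n) * l ^ A n ≤ (4 ^ k * tt Q D l) ^ n * 2 ^ (4 * l) * 2 ^ (l * E n) := by
    have e1 : (l:ℝ) ^ A n ≤ l ^ (n * Q) * 2 ^ (2 * (l:ℝ)) := by
      calc (l:ℝ) ^ A n = (l:ℝ) ^ (A n : ℝ) := hAr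
        _ ≤ (l:ℝ) ^ (n * Q + 2) := Real.rpow_le_rpow_of_exponent_le hl1 (by linarith)
        _ = l ^ (n * Q) * (l:ℝ) ^ (2:ℝ) := Real.rpow_add hl0 _ _
        _ ≤ _ := by gcongr
    have e2 : (1:ℝ) ≤ 2 ^ (-(l * (n / D)) : ℝ) * 2 ^ (2 * (l:ℝ)) * 2 ^ (l * E n) := by
      rw [hEr, ← Real.rpow_add (by norm_num), ← Real.rpow_add (by norm_num)]
      apply Real.one_le_rpow (by norm_num)
      nlinarith
    calc (4:ℝ) ^ (k * n) * l ^ A n ≤ 4 ^ (k * n) * (l ^ (n * Q) * 2 ^ (2 * (l:ℝ))) * 1 := by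
          rw [mul_one]; gcongr
      _ ≤ 4 ^ (k * n) * (l ^ (n * Q) * 2 ^ (2 * (l:ℝ))) * (2 ^ (-(l * (n / D)) : ℝ) * 2 ^ (2 * (l:ℝ)) * 2 ^ (l * E n)) := by gcongr
      _ = _ := by rw [hxn, hB]; ring
  have dn : (4 ^ k * tt Q D l) ^ n * 2 ^ (l * E n) ≤ 2 ^ (4 * l) * (4 ^ (k * n) * l ^ A n) := by
    have e1 : (l:ℝ) ^ (n * Q) ≤ l ^ A n * 2 ^ (2 * (l:ℝ)) := by
      calc (l:ℝ) ^ (n * Q) ≤ (l:ℝ) ^ ((A n : ℝ) + 2) := Real.rpow_le_rpow_of_exponent_le hl1 (by linarith)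
        _ = l ^ (A n : ℝ) * (l:ℝ) ^ (2:ℝ) := Real.rpow_add hl0 _ _
        _ ≤ l ^ (A n : ℝ) * 2 ^ (2 * (l:ℝ)) := by gcongr
        _ = _ := by rw [hAr]
    have e2 : 2 ^ (-(l * (n / D)) : ℝ) * 2 ^ (l * E n) ≤ (2:ℝ) ^ (2 * (l:ℝ)) := by
      rw [hEr, ← Real.rpow_add (by norm_num)]
      apply Real.rpow_le_rpow_of_exponent_le (by norm_num)
      nlinarith
    calc _ = 4 ^ (k * n) * (l:ℝ) ^ (n * Q) * (2 ^ (-(l * (n / D)) : ℝ) * 2 ^ (l * E n)) := by rw [hxn]; ring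
      _ ≤ 4 ^ (k * n) * (l ^ A n * 2 ^ (2 * (l:ℝ))) * (2:ℝ) ^ (2 * (l:ℝ)) := by gcongr
      _ = _ := by rw [hB]; ring
  have hE0 : (0:ℝ) < 2 ^ (l * E n) := by positivity
  refine tau_arith (B := 2 ^ (4 * l)) (K := 4 ^ k * (C + 1)) (N := n) hx (by positivity) (by positivity) ?_ ?_ ?_ ?_
  · simp only [hn, N]; push_cast; ring
  · have := hC l
    gcongr; linarith
  · exact le_of_mul_le_mul_right (g3r.trans up) hE0
  · refine le_of_mul_le_mul_right (dn.trans ?_) hE0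
    rw [mul_assoc]
    gcongr


theorem csum {α : Type*} [Primcodable α] {f : α → ℕ} {h : α → ℕ → ℕ} (hf : Computable f)
    (hh : Computable₂ h) : Computable (fun a => ∑ i ∈ Finset.range (f a), h a i) := by
  have : Computable (fun a => Nat.rec (motive := fun _ => ℕ) 0 (fun i IH => IH + h a i) (f a)) := by
    have h2 : Computable₂ (fun (a : α) (x : ℕ × ℕ) => x.2 + h a x.1) :=
      cadd (Computable.snd.comp Computable.snd)
        (hh.comp Computable.fst (Computable.fst.comp Computable.snd))
    exact Computable.nat_rec hf (Computable.const 0) h2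
  refine this.of_eq fun a => ?_
  induction f a with
  | zero => simp
  | succ n ih => rw [Finset.sum_range_succ, ← ih]

theorem uniquelyDecodable_of_prefixFree {S : Set (List Bool)} (h : PrefixFree S) (h0 : [] ∉ S) :
    InformationTheory.UniquelyDecodable S := by
  intro L1
  induction L1 with
  | nil =>
    intro L2 _ h2 he
    cases L2 with
    | nil => rfl
    | cons w L =>
      simp only [List.flatten_nil, List.flatten_cons] at he
      have : w = [] := (List.append_eq_nil_iff.1 he.symm).1
      exact absurd (this ▸ h2 w (by simp)) h0
  | cons v L1 ih =>
    intro L2 h1 h2 he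
    cases L2 with
    | nil =>
      simp only [List.flatten_nil, List.flatten_cons] at he
      have : v = [] := (List.append_eq_nil_iff.1 he).1
      exact absurd (this ▸ h1 v (by simp)) h0
    | cons w L2 =>
      simp only [List.flatten_cons] at he
      have hv := h1 v (by simp)
      have hw := h2 w (by simp)
      have p1 : v <+: w ++ L2.flatten := ⟨_, he⟩
      have p2 : w <+: w ++ L2.flatten := List.prefix_append _ _
      have hvw : v = w := by
        rcases List.prefix_or_prefix_of_prefix p1 p2 with h' | h'
        · exact h v hv w hw h'
        · exact (h w hw v hv h').symm
      subst hvw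
      rw [List.append_cancel_left_eq] at he
      rw [ih L2 (fun w hw => h1 w (by simp [hw])) (fun w hw => h2 w (by simp [hw])) he]

theorem kraft_finset (U : Computer) (h0 : [] ∉ U.domain) (F : Finset U.domain) :
    ∑ p ∈ F, (1/2 : ℝ) ^ (p : List Bool).length ≤ 1 := by
  have h := InformationTheory.kraft_mcmillan_inequality (S := F.map ⟨Subtype.val, Subtype.val_injective⟩)
    (uniquelyDecodable_of_prefixFree (S := _) (by
      intro p hp q hq hpq
      simp only [Finset.coe_map, Function.Embedding.coeFn_mk, Set.mem_image, Subtype.exists, exists_and_right, exists_eq_right] at hp hq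
      exact U.prefixFree p hp.1 q hq.1 hpq) (by
      intro h
      simp only [Finset.coe_map, Function.Embedding.coeFn_mk, Set.mem_image, Subtype.exists, exists_and_right, exists_eq_right] at h
      exact h0 h.1))
  rw [Finset.sum_map] at h
  simpa using h

theorem exists_program {U : Computer} (hU : IsOptimal U) (s : List Bool) : ∃ p, s ∈ U.f p := by
  let f : List Bool →. List Bool := fun p => bif decide (p = []) then Part.some s else Part.none
  have hf : Partrec f := Partrec.cond ((Primrec.eq.decide.to_comp).comp Computable.id (Computable.const []))
    (Computable.const s) Partrec.none
  have hdom : ∀ p, (f p).Dom → p = [] := by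
    intro p hp
    by_contra h
    simp [f, h] at hp
  obtain ⟨d, hd⟩ := hU ⟨f, hf, fun p hp q hq _ => by rw [hdom p hp, hdom q hq]⟩
  obtain ⟨p', -, h⟩ := hd [] (by simp [f])
  exact ⟨p', h s (by simp [f])⟩

theorem nil_notMem {U : Computer} (hU : IsOptimal U) : [] ∉ U.domain := by
  intro h
  have key : ∀ p, (U.f p).Dom → p = [] := fun p hp =>
    (U.prefixFree [] h p hp (List.nil_prefix)).symm
  obtain ⟨p, hp⟩ := exists_program hU []
  obtain ⟨q, hq⟩ := exists_program hU [true]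
  rw [key p hp.1] at hp
  rw [key q hq.1] at hq
  exact absurd (Part.mem_unique hp hq) (by simp)

theorem H_spec {U : Computer} (hU : IsOptimal U) (s : List Bool) :
    ∃ p, p.length = H U s ∧ s ∈ U.f p := by
  obtain ⟨p, hp⟩ := exists_program hU s
  exact Nat.sInf_mem (s := {n | ∃ p : List Bool, p.length = n ∧ s ∈ U.f p}) ⟨_, p, rfl, hp⟩

theorem H_le {U : Computer} {s p : List Bool} (h : s ∈ U.f p) : H U s ≤ p.length :=
  Nat.sInf_le ⟨p, rfl, h⟩

theorem enum_exists (U : Computer) : ∃ (F : ℕ → Finset U.domain) (act : ℕ → ℕ → Bool) (len fresh : ℕ → ℕ),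
    Computable₂ act ∧ Computable len ∧ Computable fresh ∧ Monotone F ∧ (∀ p, ∃ k, p ∈ F k) ∧
    (∀ (k : ℕ) (φ : ℕ → ℝ), ∑ p ∈ F k, φ (p : List Bool).length =
      ∑ m ∈ Finset.range k, if act k m then φ (len m) else 0) ∧
    (∀ k m, act k m = true → len m < k ∧ ∃ p : U.domain, (p : List Bool).length = len m) ∧
    (∀ k, ∀ p ∈ F k, ∀ s ∈ U.f p, Encodable.encode s < fresh k) := by
  classical
  obtain ⟨c, hc⟩ := Nat.Partrec.Code.exists_code.1 U.partrec
  have hev : ∀ p : List Bool, c.eval (Encodable.encode p) = (U.f p).map Encodable.encode := by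
    intro p; rw [hc]; simp [Part.map]
  let act : ℕ → ℕ → Bool := fun k m => (c.evaln k m).isSome && (Encodable.decode₂ (List Bool) m).isSome
  let len : ℕ → ℕ := fun m => ((Encodable.decode₂ (List Bool) m).getD []).length
  have hevc : Computable₂ (fun k m => c.evaln k m) := by
    have h2 : Computable (fun x : ℕ × ℕ => ((x.1, c), x.2)) :=
      Computable.pair (Computable.pair Computable.fst (Computable.const c)) Computable.snd
    exact Computable.comp (Nat.Partrec.Code.primrec_evaln.to_comp) h2
  have hinj : Function.Injective (fun p : U.domain => Encodable.encode (p : List Bool)) :=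
    fun p q h => Subtype.ext (Encodable.encode_injective h)
  have hact : ∀ k (p : List Bool), act k (Encodable.encode p) = true → p ∈ U.domain := by
    intro k p hp
    simp only [act, Bool.and_eq_true] at hp
    obtain ⟨x, hx⟩ := Option.isSome_iff_exists.1 hp.1
    have := Nat.Partrec.Code.evaln_sound (Option.mem_def.2 hx)
    rw [hev] at this
    exact (Part.mem_map_iff _).1 this |>.choose_spec.1.1
  have hact2 : ∀ k m, act k m = true → ∃ p : U.domain, Encodable.encode (p : List Bool) = m := by
    intro k m h
    have h' := h
    simp only [act, Bool.and_eq_true] at h'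
    obtain ⟨p, hp⟩ := Option.isSome_iff_exists.1 h'.2
    have := Encodable.decode₂_eq_some.1 hp
    refine ⟨⟨p, hact k p (this ▸ h)⟩, this⟩
  have hlen : ∀ p : List Bool, len (Encodable.encode p) = p.length := by
    intro p; simp [len]
  have hactlt : ∀ k m, act k m = true → m < k := by
    intro k m h
    simp only [act, Bool.and_eq_true] at h
    obtain ⟨x, hx⟩ := Option.isSome_iff_exists.1 h.1
    exact Nat.Partrec.Code.evaln_bound hx
  let F : ℕ → Finset U.domain := fun k =>
    ((Finset.range k).filter (fun m => act k m = true)).preimage (fun p : U.domain => Encodable.encode (p : List Bool)) hinj.injOn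
  have hF : ∀ k p, p ∈ F k ↔ act k (Encodable.encode (p : List Bool)) = true := by
    intro k p
    simp only [F, Finset.mem_preimage, Finset.mem_filter, Finset.mem_range]
    exact ⟨fun h => h.2, fun h => ⟨hactlt _ _ h, h⟩⟩
  refine ⟨F, act, len, fun k => ∑ m ∈ Finset.range k, ((c.evaln k m).getD 0 + 1), ?_, ?_, ?_, ?_, ?_, ?_, ?_, ?_⟩
  · exact cand ((Primrec.option_isSome.to_comp).comp hevc)
      ((Primrec.option_isSome.comp Primrec.decode₂).to_comp.comp Computable.snd)
  · exact Computable.list_length.comp (Computable.option_getD (Primrec.decode₂.to_comp) (Computable.const []))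
  · refine csum Computable.id ?_
    exact Computable.succ.comp (Computable.option_getD hevc (Computable.const 0))
  · intro k k' hk p hp
    rw [hF] at hp ⊢
    simp only [act, Bool.and_eq_true] at hp ⊢
    obtain ⟨x, hx⟩ := Option.isSome_iff_exists.1 hp.1
    exact ⟨Option.isSome_iff_exists.2 ⟨x, Nat.Partrec.Code.evaln_mono hk hx⟩, hp.2⟩
  · intro p
    have hp : (U.f p).Dom := p.2
    have : Encodable.encode ((U.f p).get hp) ∈ c.eval (Encodable.encode (p : List Bool)) := by
      rw [hev]; exact Part.mem_map _ (Part.get_mem hp)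
    obtain ⟨k, hk⟩ := Nat.Partrec.Code.evaln_complete.1 this
    refine ⟨k, (hF k p).2 ?_⟩
    simp only [act, Bool.and_eq_true]
    exact ⟨Option.isSome_iff_exists.2 ⟨_, hk⟩, by simp⟩
  · intro k φ
    rw [← Finset.sum_filter]
    refine Finset.sum_nbij (fun p : U.domain => Encodable.encode (p : List Bool)) ?_ hinj.injOn ?_ ?_
    · intro p hp
      simpa [F] using hp
    · intro m hm
      simp only [Finset.coe_filter, Finset.mem_range, Set.mem_ofPred_eq] at hm
      obtain ⟨p, hp⟩ := hact2 k m hm.2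
      refine ⟨p, ?_, hp⟩
      rw [Finset.mem_coe, hF]
      simp only [hp]; exact hm.2
    · intro p _; rw [hlen]
  · intro k m h
    obtain ⟨p, hp⟩ := hact2 k m h
    have h1 := hactlt k m h
    have h2 := Encodable.length_le_encode (p : List Bool)
    rw [← hp, hlen]
    exact ⟨by omega, p, rfl⟩
  · intro k p hp s hs
    rw [hF] at hp
    have h1 := hactlt _ _ hp
    simp only [act, Bool.and_eq_true] at hp
    obtain ⟨x, hx⟩ := Option.isSome_iff_exists.1 hp.1
    have h2 := Nat.Partrec.Code.evaln_sound (Option.mem_def.2 hx)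
    rw [hev] at h2
    obtain ⟨s', hs', rfl⟩ := (Part.mem_map_iff _).1 h2
    have := Part.mem_unique hs hs'
    subst this
    have h3 := Finset.single_le_sum (f := fun m => (c.evaln k m).getD 0 + 1) (fun i _ => Nat.zero_le _) (Finset.mem_range.2 h1)
    simp only [hx, Option.getD_some] at h3
    exact h3


theorem tt_nonneg (Q D : ℝ) (l : ℕ) : 0 ≤ tt Q D l := by unfold tt; positivity

theorem tt_bound (Q : ℝ) {D r : ℝ} (hr : r < 1 / D) :
    ∃ C : ℝ, 0 < C ∧ ∀ l : ℕ, tt Q D l ≤ C * 2 ^ (-(l * r) : ℝ) := by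
  have hb : 0 < Real.log 2 * (1 / D - r) := mul_pos (Real.log_pos (by norm_num)) (by linarith)
  have h := (tendsto_rpow_mul_exp_neg_mul_atTop_nhds_zero Q _ hb).comp tendsto_natCast_atTop_atTop
  obtain ⟨C, hC⟩ := h.bddAbove_range
  refine ⟨max C 1, by positivity, fun l => ?_⟩
  have h1 : (l:ℝ) ^ Q * Real.exp (-(Real.log 2 * (1 / D - r)) * l) ≤ C := hC ⟨l, rfl⟩
  have h2 : tt Q D l = (l:ℝ) ^ Q * Real.exp (-(Real.log 2 * (1 / D - r)) * l) * 2 ^ (-(l * r) : ℝ) := by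
    unfold tt
    rw [Real.rpow_def_of_pos (by norm_num : (0:ℝ) < 2), Real.rpow_def_of_pos (by norm_num : (0:ℝ) < 2), mul_assoc, ← Real.exp_add]
    congr 2; ring
  rw [h2]
  gcongr
  exact h1.trans (le_max_left _ _)

theorem summable_half (U : Computer) (h0 : [] ∉ U.domain) :
    Summable (fun p : U.domain => (1/2 : ℝ) ^ (p : List Bool).length) :=
  summable_of_sum_le (fun _ => by positivity) (kraft_finset U h0)

theorem rpow_half (l : ℕ) : (2:ℝ) ^ (-(l:ℝ)) = (1/2) ^ l := by
  rw [Real.rpow_neg (by norm_num), Real.rpow_natCast, one_div, inv_pow]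

theorem summable_w (U : Computer) (h0 : [] ∉ U.domain) (Q : ℝ) {D : ℝ} (hD0 : 0 < D) (hD1 : D < 1) :
    Summable (fun p : U.domain => tt Q D (p : List Bool).length) := by
  obtain ⟨C, hC0, hC⟩ := tt_bound Q (D := D) (r := 1) (by rw [lt_div_iff₀ hD0]; linarith)
  refine Summable.of_nonneg_of_le (fun _ => tt_nonneg _ _ _) (fun p => ?_) ((summable_half U h0).mul_left C)
  have := hC (p : List Bool).length
  rwa [mul_one, rpow_half] at this

theorem data_exists (U : Computer) (h0 : [] ∉ U.domain) {Q D : ℝ} (hQ : 0 < Q) (hQc : ComputableReal Q)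
    (hD0 : 0 < D) (hDc : ComputableReal D) :
    ∃ (F : ℕ → Finset U.domain) (G O fresh : ℕ → ℕ), Computable G ∧ Computable O ∧ Computable fresh ∧
    Monotone F ∧ (∀ p, ∃ k, p ∈ F k) ∧
    (∀ k, ∀ p ∈ F k, ∀ s ∈ U.f p, Encodable.encode s < fresh k) ∧
    (∀ k, |(G k : ℝ) - 4 ^ k * ∑ p ∈ F k, tt Q D (p : List Bool).length| ≤ 2 * k) ∧
    (∀ k, (O k : ℝ) = 2 ^ k * ∑ p ∈ F k, (1/2 : ℝ) ^ (p : List Bool).length) := by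
  obtain ⟨F, act, len, fresh, hact, hlen, hfresh, hmono, hexh, hsum, hlt, hfr⟩ := enum_exists U
  obtain ⟨C, hC0, hC⟩ := tt_bound Q (D := D) (r := 0) (by positivity)
  obtain ⟨n, hn⟩ := exists_nat_gt C
  obtain ⟨τ, hτ, hτ1⟩ := exists_tau hQ hQc hD0 hDc n (fun l => by
    have := hC l
    simp only [mul_zero, neg_zero, Real.rpow_zero, mul_one] at this
    linarith)
  refine ⟨F, fun k => ∑ m ∈ Finset.range k, bif act k m then τ k (len m) else 0,
    fun k => ∑ m ∈ Finset.range k, bif act k m then 2 ^ (k - len m) else 0, fresh, ?_, ?_, hfresh,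
    hmono, hexh, hfr, ?_, ?_⟩
  · refine csum Computable.id ?_
    exact Computable.cond hact (hτ.comp Computable.fst (hlen.comp Computable.snd)) (Computable.const 0)
  · refine csum Computable.id ?_
    exact Computable.cond hact (cpow (Computable.const 2) (csub Computable.fst (hlen.comp Computable.snd))) (Computable.const 0)
  · intro k
    rw [hsum k (tt Q D)]
    push_cast
    rw [Finset.mul_sum, ← Finset.sum_sub_distrib]
    refine (Finset.abs_sum_le_sum_abs _ _).trans ?_
    have : ∀ m ∈ Finset.range k, |((bif act k m then τ k (len m) else 0 : ℕ) : ℝ) - 4 ^ k * (if act k m = true then tt Q D (len m) else 0)| ≤ 2 := by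
      intro m _
      cases h : act k m with
      | false => simp
      | true =>
        obtain ⟨_, p, hp⟩ := hlt k m h
        simp only [cond_true, if_true]
        apply hτ1
        rw [← hp]
        rcases Nat.eq_zero_or_pos (p : List Bool).length with h' | h'
        · exact absurd (List.eq_nil_of_length_eq_zero h' ▸ p.2) h0
        · exact h'
    refine (Finset.sum_le_card_nsmul _ _ _ this).trans ?_
    simp [mul_comm]
  · intro k
    rw [hsum k (fun l => (1/2:ℝ) ^ l)]
    push_cast
    rw [Finset.mul_sum]
    refine Finset.sum_congr rfl fun m _ => ?_
    cases h : act k m with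
    | false => simp
    | true =>
      have := (hlt k m h).1
      simp only [cond_true, if_true]
      push_cast
      rw [pow_sub₀ _ (by norm_num) this.le, one_div, inv_pow]

theorem four_pow_tendsto : Tendsto (fun k : ℕ => (k:ℝ) / 4 ^ k) atTop (nhds 0) := by
  have := tendsto_pow_const_div_const_pow_of_one_lt 1 (r := (4:ℝ)) (by norm_num)
  simpa using this

section
variable {U : Computer} {Q D : ℝ} {F : ℕ → Finset U.domain} {G : ℕ → ℕ}

theorem tendsto_partial (hmono : Monotone F) (hexh : ∀ p, ∃ k, p ∈ F k) {φ : U.domain → ℝ}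
    (hs : Summable φ) : Tendsto (fun k => ∑ p ∈ F k, φ p) atTop (nhds (∑' p, φ p)) :=
  hs.hasSum.comp (tendsto_atTop_finset_of_monotone hmono hexh)

theorem tendsto_G (hmono : Monotone F) (hexh : ∀ p, ∃ k, p ∈ F k)
    (hs : Summable (fun p : U.domain => tt Q D (p : List Bool).length))
    (hG : ∀ k, |(G k : ℝ) - 4 ^ k * ∑ p ∈ F k, tt Q D (p : List Bool).length| ≤ 2 * k) :
    Tendsto (fun k => ((G k : ℝ) - 2 * k) / 4 ^ k) atTop (nhds (∑' p : U.domain, tt Q D (p : List Bool).length)) := by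
  have h1 := tendsto_partial hmono hexh hs
  have h2 : Tendsto (fun k : ℕ => (∑ p ∈ F k, tt Q D (p : List Bool).length) - 4 * ((k:ℝ) / 4 ^ k)) atTop
      (nhds (∑' p : U.domain, tt Q D (p : List Bool).length)) := by
    simpa using h1.sub (four_pow_tendsto.const_mul 4)
  refine tendsto_of_tendsto_of_tendsto_of_le_of_le h2 h1 (fun k => ?_) (fun k => ?_)
  · have := (abs_le.1 (hG k)).1
    have h4 : (0:ℝ) < 4 ^ k := by positivity
    simp only
    rw [le_div_iff₀ h4, sub_mul, mul_assoc, div_mul_cancel₀ _ h4.ne']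
    linarith
  · have := (abs_le.1 (hG k)).2
    have h4 : (0:ℝ) < 4 ^ k := by positivity
    simp only
    rw [div_le_iff₀ h4]
    linarith

theorem G_le (hG : ∀ k, |(G k : ℝ) - 4 ^ k * ∑ p ∈ F k, tt Q D (p : List Bool).length| ≤ 2 * k) (k : ℕ) :
    ((G k : ℝ) - 2 * k) / 4 ^ k ≤ ∑ p ∈ F k, tt Q D (p : List Bool).length := by
  have := (abs_le.1 (hG k)).2
  have h4 : (0:ℝ) < 4 ^ k := by positivity
  rw [div_le_iff₀ h4]
  linarith

theorem left_comp (hmono : Monotone F) (hexh : ∀ p, ∃ k, p ∈ F k)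
    (hs : Summable (fun p : U.domain => tt Q D (p : List Bool).length)) (hGc : Computable G)
    (hG : ∀ k, |(G k : ℝ) - 4 ^ k * ∑ p ∈ F k, tt Q D (p : List Bool).length| ≤ 2 * k) :
    LeftComputable (∑' p : U.domain, tt Q D (p : List Bool).length) := by
  refine ⟨fun k => (((2 * k : ℕ) : ℚ) - G k) / (4 ^ k : ℕ), ?_, ?_, ?_⟩
  · exact computable_rat_mk (cmul (Computable.const 2) Computable.id) hGc
      (cpow (Computable.const 4) Computable.id) (fun n => by positivity)
  · intro k
    have h1 := G_le hG k
    have h2 := hs.sum_le_tsum (F k) (fun p _ => tt_nonneg _ _ _)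
    push_cast
    have : (2 * (k:ℝ) - G k) / 4 ^ k = - (((G k : ℝ) - 2 * k) / 4 ^ k) := by ring
    rw [this]
    linarith
  · have := (tendsto_G hmono hexh hs hG).neg
    refine this.congr fun k => ?_
    push_cast; ring

end


def val (s : List Bool) : ℕ := s.foldl (fun a b => 2 * a + b.toNat) 0

theorem prim_toNat : Primrec Bool.toNat := Primrec.dom_finite _

theorem val_comp : Computable val := by
  refine Primrec.to_comp ?_
  unfold val
  refine Primrec.list_foldl (h := fun (_ : List Bool) (x : ℕ × Bool) => 2 * x.1 + x.2.toNat) Primrec.id (Primrec.const 0) ?_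
  exact Primrec.nat_add.comp (Primrec.nat_mul.comp (Primrec.const 2) (Primrec.fst.comp Primrec.snd))
    (prim_toNat.comp (Primrec.snd.comp Primrec.snd))

theorem val_append (s : List Bool) (b : Bool) : val (s ++ [b]) = 2 * val s + b.toNat := by
  simp [val]

theorem bits_succ (x : ℝ) (n : ℕ) : bits x (n+1) = bits x n ++ [binDigit x (n+1)] := by
  simp [bits, List.range_succ]

theorem bits_length (x : ℝ) (n : ℕ) : (bits x n).length = n := by simp [bits]

theorem floor_two (y : ℝ) : ⌊y * 2⌋ = 2 * ⌊y⌋ + ⌊y*2⌋ % 2 := by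
  have h : ⌊y * 2⌋ / 2 = ⌊y⌋ := by
    have := Int.floor_div_natCast (y * 2) 2
    rw [← Nat.cast_ofNat (R := ℤ), ← this]; congr 1; push_cast; ring
  omega

theorem val_bits (x : ℝ) (n : ℕ) : (val (bits x n) : ℤ) = ⌊Int.fract x * 2 ^ n⌋ := by
  induction n with
  | zero => simp [bits, val]
  | succ n ih =>
    rw [bits_succ, val_append, pow_succ, ← mul_assoc, floor_two, ← ih, binDigit, pow_succ, ← mul_assoc]
    push_cast
    congr 1
    rcases Int.emod_two_eq_zero_or_one ⌊Int.fract x * 2 ^ n * 2⌋ with h | h <;> simp [h]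

theorem fresh_comp : Computable (fun n : ℕ => List.replicate n true) := by
  have h : Primrec (fun n : ℕ => (List.range n).map (fun _ => true)) :=
    Primrec.list_map Primrec.list_range (Primrec.const true).to₂
  refine (h.to_comp).of_eq fun n => ?_
  simp

theorem fresh_encode (n : ℕ) : n ≤ Encodable.encode (List.replicate n true) := by
  simpa using Encodable.length_le_encode (List.replicate n true)

section
variable {U : Computer} {Q D : ℝ} {F : ℕ → Finset U.domain} {G fresh : ℕ → ℕ}

theorem tail_ge {φ : U.domain → ℝ} (hs : Summable φ) (h : ∀ p, 0 ≤ φ p) (A : Finset U.domain) (p : U.domain) (hp : p ∉ A) :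
    φ p ≤ (∑' p, φ p) - ∑ p ∈ A, φ p := by
  classical
  have := hs.sum_le_tsum (insert p A) (fun i _ => h i)
  rw [Finset.sum_insert hp] at this
  linarith

theorem random_key (hU : IsOptimal U) (hmono : Monotone F) (hexh : ∀ p, ∃ k, p ∈ F k)
    (hs : Summable (fun p : U.domain => tt Q D (p : List Bool).length)) (hGc : Computable G)
    (hfc : Computable fresh)
    (hf : ∀ k, ∀ p ∈ F k, ∀ s ∈ U.f p, Encodable.encode s < fresh k)
    (hG : ∀ k, |(G k : ℝ) - 4 ^ k * ∑ p ∈ F k, tt Q D (p : List Bool).length| ≤ 2 * k) :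
    ∃ d : ℕ, ∀ n : ℕ, ∃ l : ℕ, 1 ≤ l ∧ l ≤ H U (bits (∑' p : U.domain, tt Q D (p : List Bool).length) n) + d ∧
      tt Q D l < 2 / 2 ^ n := by
  set T := ∑' p : U.domain, tt Q D (p : List Bool).length with hT
  have hT0 : 0 ≤ T := tsum_nonneg fun _ => tt_nonneg _ _ _
  let I := ⌊T⌋₊
  let R : List Bool → ℕ → Bool := fun s k =>
    decide ((I * 2 ^ s.length + val s) * 4 ^ k + 2 * k * 2 ^ s.length < G k * 2 ^ s.length + 4 ^ k)
  have hR : Computable₂ R := by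
    have hl : Computable (fun x : List Bool × ℕ => 2 ^ x.1.length) :=
      cpow (Computable.const 2) (Computable.list_length.comp Computable.fst)
    have h4 : Computable (fun x : List Bool × ℕ => 4 ^ x.2) := cpow (Computable.const 4) Computable.snd
    exact clt (cadd (cmul (cadd (cmul (Computable.const I) hl) (val_comp.comp Computable.fst)) h4)
      (cmul (cmul (Computable.const 2) Computable.snd) hl))
      (cadd (cmul (hGc.comp Computable.snd) hl) h4)
  let g : List Bool →. List Bool := fun s => (Nat.rfind (fun k => Part.some (R s k))).map
    (fun k => List.replicate (fresh k) true)
  have hg : Partrec g := Partrec.map (Partrec.rfind hR)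
    ((fresh_comp.comp (hfc.comp Computable.snd)).to₂)
  let f : List Bool →. List Bool := fun p => (U.f p).bind g
  have hfp : Partrec f := U.partrec.bind (hg.comp Computable.snd).to₂
  have hdom : ∀ p, (f p).Dom → p ∈ U.domain := fun p hp => hp.1
  obtain ⟨d, hd⟩ := hU ⟨f, hfp, fun p hp q hq h => U.prefixFree p (hdom p hp) q (hdom q hq) h⟩
  refine ⟨d, fun n => ?_⟩
  obtain ⟨p, hpl, hp⟩ := H_spec hU (bits T n)
  have h2 : (0:ℝ) < 2 ^ n := by positivity
  have hv : (val (bits T n) : ℝ) = ⌊Int.fract T * 2 ^ n⌋ := by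
    have := val_bits T n
    exact_mod_cast this
  have hI : (I : ℝ) + Int.fract T = T := by
    simp only [I]
    rw [natCast_floor_eq_intCast_floor hT0, Int.floor_add_fract]
  have hv1 := Int.floor_le (Int.fract T * 2 ^ n)
  have hv2 := Int.lt_floor_add_one (Int.fract T * 2 ^ n)
  rw [← hv] at hv1 hv2
  have hiff : ∀ k, R (bits T n) k = true ↔
      (I:ℝ) + val (bits T n) / 2 ^ n - 1 / 2 ^ n < ((G k : ℝ) - 2 * k) / 4 ^ k := by
    intro k
    have h4 : (0:ℝ) < 4 ^ k := by positivity
    simp only [R, decide_eq_true_eq, bits_length]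
    rw [← Nat.cast_lt (α := ℝ), lt_div_iff₀ h4, ← mul_lt_mul_iff_left₀ (b := (_ + _ - _) * _) h2]
    push_cast
    have : (((I:ℝ) + val (bits T n) / 2 ^ n - 1 / 2 ^ n) * 4 ^ k) * 2 ^ n =
      (I * 2 ^ n + val (bits T n) - 1) * 4 ^ k := by field_simp
    rw [this]
    constructor <;> intro h <;> linarith
  have hlo : (I:ℝ) + val (bits T n) / 2 ^ n - 1 / 2 ^ n < T := by
    have : (val (bits T n) : ℝ) / 2 ^ n ≤ Int.fract T := by rwa [div_le_iff₀ h2]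
    have : 0 < 1 / (2:ℝ) ^ n := by positivity
    linarith
  have hhi : T - 2 / 2 ^ n < (I:ℝ) + val (bits T n) / 2 ^ n - 1 / 2 ^ n := by
    have : Int.fract T < ((val (bits T n) : ℝ) + 1) / 2 ^ n := by rwa [lt_div_iff₀ h2]
    rw [add_div] at this
    have : 2 / (2:ℝ) ^ n = 1 / 2 ^ n + 1 / 2 ^ n := by ring
    linarith
  obtain ⟨k0, hk0⟩ := ((tendsto_G hmono hexh hs hG).eventually_const_lt hlo).exists
  have hgd : (Nat.rfind (fun k => Part.some (R (bits T n) k))).Dom :=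
    Nat.rfind_dom.2 ⟨k0, Part.mem_some_iff.2 ((hiff k0).2 hk0).symm, fun _ => trivial⟩
  let k := (Nat.rfind (fun k => Part.some (R (bits T n) k))).get hgd
  have hk : R (bits T n) k = true := by
    have := Nat.rfind_spec (Part.get_mem hgd)
    exact (Part.mem_some_iff.1 this).symm
  have hfm : List.replicate (fresh k) true ∈ f p :=
    Part.mem_bind_iff.2 ⟨_, hp, (Part.mem_map_iff _).2 ⟨k, Part.get_mem hgd, rfl⟩⟩
  obtain ⟨p', hp', hU'⟩ := hd p hfm.1
  have hU' := hU' _ hfm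
  have hnot : (⟨p', hU'.1⟩ : U.domain) ∉ F k := fun h =>
    absurd (hf k _ h _ hU') (not_lt.2 (fresh_encode _))
  refine ⟨p'.length, ?_, ?_, ?_⟩
  · by_contra h
    have : p' = [] := by simpa using h
    exact nil_notMem hU (this ▸ hU'.1)
  · rw [← hpl]; exact hp'
  · have h1 := tail_ge hs (fun _ => tt_nonneg _ _ _) (F k) _ hnot
    have h3 := (hiff k).1 hk
    have h4 := G_le hG k
    simp only at h1
    linarith

theorem random_final (hD0 : 0 < D) (hQ : 0 < Q) (h : ℕ → ℕ) (d : ℕ)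
    (hd : ∀ n, ∃ l : ℕ, 1 ≤ l ∧ l ≤ h n + d ∧ tt Q D l < 2 / 2 ^ n) :
    Tendsto (fun n : ℕ => (h n : ℝ) - D * n) atTop atTop := by
  choose l hl1 hl2 hl3 using hd
  have key : ∀ n : ℕ, (n:ℝ) - 1 < (l n : ℝ) / D - Q * Real.logb 2 (l n) := by
    intro n
    have hpos : (0:ℝ) < l n := by exact_mod_cast hl1 n
    have := hl3 n
    unfold tt at this
    have h1 : (l n : ℝ) ^ Q = 2 ^ (Q * Real.logb 2 (l n)) := by
      rw [mul_comm, Real.rpow_mul (by norm_num), Real.rpow_logb (by norm_num) (by norm_num) hpos]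
    have h2 : (2:ℝ) / 2 ^ n = 2 ^ (1 - (n:ℝ)) := by
      rw [Real.rpow_sub (by norm_num), Real.rpow_one, Real.rpow_natCast]
    rw [h1, h2, ← Real.rpow_add (by norm_num), Real.rpow_lt_rpow_left_iff (by norm_num)] at this
    have : -(l n : ℝ) / D = -((l n : ℝ) / D) := by ring
    linarith
  have hlog : ∀ n, 0 ≤ Real.logb 2 (l n) := fun n => Real.logb_nonneg (by norm_num) (by exact_mod_cast hl1 n)
  have hlt : Tendsto (fun n => (l n : ℝ)) atTop atTop := by
    have h0 : Tendsto (fun n : ℕ => D * ((n:ℝ) + (-1))) atTop atTop :=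
      (tendsto_atTop_add_const_right _ _ tendsto_natCast_atTop_atTop).const_mul_atTop hD0
    refine tendsto_atTop_mono (fun n => ?_) h0
    have h1 := key n
    have h2 := mul_nonneg hQ.le (hlog n)
    have : (n:ℝ) + -1 ≤ (l n : ℝ) / D := by linarith
    rw [le_div_iff₀ hD0] at this
    linarith
  have h3 : Tendsto (fun n => D * (Q * Real.logb 2 (l n)) + (-D - d)) atTop atTop :=
    tendsto_atTop_add_const_right _ _
      ((((Real.tendsto_logb_atTop (by norm_num)).comp hlt).const_mul_atTop hQ).const_mul_atTop hD0)
  refine tendsto_atTop_mono (fun n => ?_) h3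
  have h1 := key n
  have h2 : (l n : ℝ) ≤ h n + d := by exact_mod_cast hl2 n
  have h4 : (n:ℝ) - 1 + Q * Real.logb 2 (l n) < (l n : ℝ) / D := by linarith
  rw [lt_div_iff₀ hD0] at h4
  nlinarith
end


def toBits (n a : ℕ) : List Bool := (List.range n).map (fun i => decide (a / 2 ^ (n - (i+1)) % 2 = 1))

theorem toBits_prim : Primrec₂ toBits := by
  unfold toBits
  refine Primrec.list_map (Primrec.list_range.comp Primrec.fst) ?_
  have h : PrimrecRel (fun (x : ℕ × ℕ) (i : ℕ) => x.2 / 2 ^ (x.1 - (i+1)) % 2 = 1) :=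
    Primrec.eq.comp (Primrec.nat_mod.comp (Primrec.nat_div.comp (Primrec.snd.comp Primrec.fst)
      (prim_pow.comp (Primrec.const 2) (Primrec.nat_sub.comp (Primrec.fst.comp Primrec.fst)
        (Primrec.succ.comp Primrec.snd)))) (Primrec.const 2)) (Primrec.const 1)
  exact h.decide

theorem toBits_length (n a : ℕ) : (toBits n a).length = n := by simp [toBits]

theorem toBits_succ (n a : ℕ) : toBits (n+1) a = toBits n (a/2) ++ [decide (a % 2 = 1)] := by
  unfold toBits
  rw [List.range_succ, List.map_append]
  congr 1
  · refine List.map_congr_left fun i hi => ?_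
    rw [List.mem_range] at hi
    have : n + 1 - (i+1) = (n - (i+1)) + 1 := by omega
    rw [this, pow_succ', Nat.div_div_eq_div_mul]
  · simp

theorem val_toBits (n a : ℕ) : val (toBits n a) = a % 2 ^ n := by
  induction n generalizing a with
  | zero => simp [toBits, val, Nat.mod_one]
  | succ n ih =>
    rw [toBits_succ, val_append, ih]
    have h : (decide (a % 2 = 1)).toNat = a % 2 := by
      rcases Nat.mod_two_eq_zero_or_one a with h | h <;> simp [h]
    rw [h, pow_succ', Nat.mod_mul]
    omega

theorem val_app (s w : List Bool) : val (s ++ w) = val s * 2 ^ w.length + val w := by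
  induction w using List.reverseRecOn with
  | nil => simp [val]
  | append_singleton w b ih =>
    rw [← List.append_assoc, val_append, val_append, ih]
    simp [pow_succ]
    ring

theorem val_inj (s : List Bool) : ∀ t : List Bool, s.length = t.length → val s = val t → s = t := by
  induction s using List.reverseRecOn with
  | nil => intro t h _; simpa [eq_comm] using h
  | append_singleton s b ih =>
    intro t
    induction t using List.reverseRecOn with
    | nil => intro h; simp at h
    | append_singleton t c _ =>
      intro hl hv
      rw [val_append, val_append] at hv
      have hb : b = c := by
        cases b <;> cases c <;> simp at hv ⊢ <;> omega
      subst hb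
      rw [ih t (by simpa using hl) (by omega)]

theorem bits_eq {T : ℝ} (hT0 : 0 ≤ T) (n : ℕ) : bits T n = toBits n ⌊T * 2 ^ n⌋₊ := by
  refine val_inj _ _ (by rw [bits_length, toBits_length]) ?_
  rw [val_toBits]
  have h1 := val_bits T n
  have h2 : (⌊T * 2 ^ n⌋₊ : ℤ) = ⌊T * 2 ^ n⌋ := Int.natCast_floor_eq_floor (by positivity)
  have h3 : ⌊T * 2 ^ n⌋ = ⌊Int.fract T * 2 ^ n⌋ + ⌊T⌋ * 2 ^ n := by
    have : T * 2 ^ n = Int.fract T * 2 ^ n + ((⌊T⌋ * 2 ^ n : ℤ) : ℝ) := by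
      push_cast
      rw [← add_mul, Int.fract_add_floor]
    rw [this, Int.floor_add_intCast]
  have h4 : (val (bits T n) : ℤ) < 2 ^ n := by
    rw [h1, Int.floor_lt]
    push_cast
    have := Int.fract_lt_one T
    have : (0:ℝ) < 2 ^ n := by positivity
    nlinarith
  zify
  rw [h2, h3, ← h1, Int.add_mul_emod_self_right, Int.emod_eq_of_lt (by positivity) h4]

section
variable {U : Computer} {Q D : ℝ} {F : ℕ → Finset U.domain} {G O : ℕ → ℕ}

theorem tail_le {φ ψ : U.domain → ℝ} (hs : Summable φ) (hs' : Summable ψ) (c : ℝ) (A : Finset U.domain)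
    (h : ∀ p ∉ A, φ p ≤ c * ψ p) :
    (∑' p, φ p) - ∑ p ∈ A, φ p ≤ c * ((∑' p, ψ p) - ∑ p ∈ A, ψ p) := by
  have := ((hs'.mul_left c).sub hs).sum_le_tsum A (fun i hi => sub_nonneg.2 (h i hi))
  rw [(hs'.mul_left c).tsum_sub hs, tsum_mul_left, Finset.sum_sub_distrib, ← Finset.mul_sum] at this
  linarith

theorem num_bound (h0 : [] ∉ U.domain) (hD0 : 0 < D)
    (hs : Summable (fun p : U.domain => tt Q D (p : List Bool).length))
    (hG : ∀ k, |(G k : ℝ) - 4 ^ k * ∑ p ∈ F k, tt Q D (p : List Bool).length| ≤ 2 * k)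
    {M K : ℕ} (hK : 0 < K) (hKM : K ≤ M) (hDK : D * M < K) (r : ℕ) :
    ∃ E : ℕ, ∀ j k : ℕ, M * j + r ≤ k →
      (∑' p : U.domain, (1/2 : ℝ) ^ (p : List Bool).length) - (1/2) ^ (K * j)
        ≤ ∑ p ∈ F k, (1/2 : ℝ) ^ (p : List Bool).length →
      ⌊(∑' p : U.domain, tt Q D (p : List Bool).length) * 2 ^ (M * j + r)⌋₊ ≤
        G k * 2 ^ (M * j + r) / 4 ^ k + E ∧
      G k * 2 ^ (M * j + r) / 4 ^ k ≤
        ⌊(∑' p : U.domain, tt Q D (p : List Bool).length) * 2 ^ (M * j + r)⌋₊ + E := by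
  set T := ∑' p : U.domain, tt Q D (p : List Bool).length with hT
  have hT0 : 0 ≤ T := tsum_nonneg fun _ => tt_nonneg _ _ _
  have hKr : (0:ℝ) < K := by exact_mod_cast hK
  have hKMr : (K:ℝ) ≤ M := by exact_mod_cast hKM
  obtain ⟨C, hC0, hC⟩ := tt_bound Q (D := D) (r := (M:ℝ) / K) (by
    rw [div_lt_div_iff₀ hKr hD0]; linarith)
  refine ⟨⌈C * 2 ^ r⌉₊ + 4, fun j k hk hδ => ?_⟩
  set n := M * j + r with hn
  have htail : T - ∑ p ∈ F k, tt Q D (p : List Bool).length ≤ C * (1/2) ^ (M * j) := by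
    have h1 := tail_le hs (summable_half U h0) (C * (1/2) ^ ((M - K) * j)) (F k) (fun p hp => by
      have h2 := tail_ge (summable_half U h0) (fun _ => by positivity) (F k) p hp
      have h3 : (1/2 : ℝ) ^ (p : List Bool).length ≤ (1/2) ^ (K * j) := by linarith
      have h4 : K * j ≤ (p : List Bool).length := by
        rwa [pow_le_pow_iff_right_of_lt_one₀ (by norm_num) (by norm_num)] at h3
      refine (hC _).trans ?_
      rw [mul_assoc]
      refine mul_le_mul_of_nonneg_left ?_ hC0.le
      rw [← pow_add, ← rpow_half]
      refine Real.rpow_le_rpow_of_exponent_le (by norm_num) (neg_le_neg ?_)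
      push_cast [Nat.cast_sub hKM]
      have h5 : (K:ℝ) * j ≤ (p : List Bool).length := by exact_mod_cast h4
      rw [← mul_div_assoc, le_div_iff₀ hKr]
      nlinarith)
    refine h1.trans ?_
    have h6 : (1/2:ℝ) ^ (M * j) = (1/2) ^ ((M - K) * j) * (1/2) ^ (K * j) := by
      rw [← pow_add, ← add_mul, Nat.sub_add_cancel hKM]
    rw [h6, ← mul_assoc]
    refine mul_le_mul_of_nonneg_left (by linarith) (by positivity)
  have htail0 : ∑ p ∈ F k, tt Q D (p : List Bool).length ≤ T :=
    hs.sum_le_tsum _ (fun _ _ => tt_nonneg _ _ _)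
  set S := ∑ p ∈ F k, tt Q D (p : List Bool).length with hS
  have h2n : (0:ℝ) < 2 ^ n := by positivity
  have h4k : (0:ℝ) < 4 ^ k := by positivity
  have h7 : T * 2 ^ n - S * 2 ^ n ≤ C * 2 ^ r := by
    have : C * (1/2:ℝ) ^ (M * j) * 2 ^ n = C * 2 ^ r := by
      rw [hn, pow_add, one_div, inv_pow]; field_simp
    rw [← this, ← sub_mul]
    exact mul_le_mul_of_nonneg_right htail h2n.le
  have h7' : S * 2 ^ n ≤ T * 2 ^ n := mul_le_mul_of_nonneg_right htail0 h2n.le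
  have h8 : |(G k : ℝ) * 2 ^ n / 4 ^ k - S * 2 ^ n| ≤ 2 := by
    have e : (G k : ℝ) * 2 ^ n / 4 ^ k - S * 2 ^ n = (G k - 4 ^ k * S) * (2 ^ n / 4 ^ k) := by
      field_simp
    rw [e, abs_mul, abs_of_pos (div_pos h2n h4k), ← mul_div_assoc, div_le_iff₀ h4k]
    have h9 : (2:ℝ) ^ n ≤ 2 ^ k := pow_le_pow_right₀ (by norm_num) hk
    have h10 : (k:ℝ) ≤ 2 ^ k := by exact_mod_cast Nat.lt_two_pow_self.le
    have h11 : (4:ℝ) ^ k = 2 ^ k * 2 ^ k := by rw [← mul_pow]; norm_num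
    calc _ ≤ (2 * k : ℝ) * 2 ^ k := mul_le_mul (hG k) h9 h2n.le (by positivity)
      _ ≤ _ := by rw [h11]; nlinarith
  have hy : ((G k * 2 ^ n / 4 ^ k : ℕ) : ℝ) ≤ (G k : ℝ) * 2 ^ n / 4 ^ k := by
    have := Nat.cast_div_le (α := ℝ) (m := G k * 2 ^ n) (n := 4 ^ k)
    push_cast at this
    exact this
  have hy2 : (G k : ℝ) * 2 ^ n / 4 ^ k < ((G k * 2 ^ n / 4 ^ k : ℕ) : ℝ) + 1 := by
    rw [div_lt_iff₀ h4k]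
    have := Nat.lt_div_mul_add (a := G k * 2 ^ n) (b := 4 ^ k) (by positivity)
    have : ((G k * 2 ^ n : ℕ) : ℝ) < ((G k * 2 ^ n / 4 ^ k * 4 ^ k + 4 ^ k : ℕ) : ℝ) := by exact_mod_cast this
    push_cast at this
    push_cast
    linarith
  have hz := Nat.floor_le (show 0 ≤ T * 2 ^ n by positivity)
  have hz2 := Nat.lt_floor_add_one (T * 2 ^ n)
  have hc := Nat.le_ceil (C * 2 ^ r)
  have h8' := abs_le.1 h8
  constructor
  · rw [← Nat.cast_le (α := ℝ), Nat.cast_add]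
    simp only [Nat.cast_add, Nat.cast_ofNat]
    linarith
  · rw [← Nat.cast_le (α := ℝ), Nat.cast_add]
    simp only [Nat.cast_add, Nat.cast_ofNat]
    have : (0:ℝ) ≤ ⌈C * 2 ^ r⌉₊ := by positivity
    linarith

theorem idx_comp : Computable (fun p : List Bool => p.idxOf false) :=
  (Primrec.list_idxOf.comp (Primrec.const false) Primrec.id).to_comp

theorem compress_key (hU : IsOptimal U) (hD0 : 0 < D) (hmono : Monotone F) (hexh : ∀ p, ∃ k, p ∈ F k)
    (hs : Summable (fun p : U.domain => tt Q D (p : List Bool).length)) (hGc : Computable G)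
    (hOc : Computable O)
    (hG : ∀ k, |(G k : ℝ) - 4 ^ k * ∑ p ∈ F k, tt Q D (p : List Bool).length| ≤ 2 * k)
    (hO : ∀ k, (O k : ℝ) = 2 ^ k * ∑ p ∈ F k, (1/2 : ℝ) ^ (p : List Bool).length)
    {M K : ℕ} (hK : 0 < K) (hKM : K ≤ M) (hDK : D * M < K) (r : ℕ) :
    ∃ c : ℕ, ∀ j : ℕ, H U (bits (∑' p : U.domain, tt Q D (p : List Bool).length) (M * j + r)) ≤
      (K + 1) * j + c := by
  have h0 := nil_notMem hU
  obtain ⟨E, hE⟩ := num_bound h0 hD0 hs hG hK hKM hDK r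
  set T := ∑' p : U.domain, tt Q D (p : List Bool).length with hT
  have hT0 : 0 ≤ T := tsum_nonneg fun _ => tt_nonneg _ _ _
  let J : List Bool → ℕ := fun p => p.idxOf false
  have hJ : Computable J := idx_comp
  have hL : Computable (fun p => 2 ^ (K * J p)) := cpow (Computable.const 2) (cmul (Computable.const K) hJ)
  let N : List Bool → ℕ := fun p => M * J p + r
  have hN : Computable N := cadd (cmul (Computable.const M) hJ) (Computable.const r)
  let R : List Bool → ℕ → Bool := fun p k => decide (p.length = J p + 1 + K * J p) &&
    (decide (N p ≤ k) && decide ((val p % 2 ^ (K * J p)) * 2 ^ k < O k * 2 ^ (K * J p)))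
  have hR : Computable₂ R := by
    have hL1 : Computable (fun x : List Bool × ℕ => 2 ^ (K * J x.1)) := hL.comp Computable.fst
    refine cand (ceq (Computable.list_length.comp Computable.fst)
      (cadd (cadd (hJ.comp Computable.fst) (Computable.const 1)) (cmul (Computable.const K) (hJ.comp Computable.fst))))
      (cand (cle (hN.comp Computable.fst) Computable.snd) (clt (cmul ?_ (cpow (Computable.const 2) Computable.snd))
        (cmul (hOc.comp Computable.snd) hL1)))
    exact (Primrec.nat_mod.to_comp).comp (val_comp.comp Computable.fst) hL1
  let f : ℕ → ℕ → List Bool →. List Bool := fun e1 e2 p => (Nat.rfind (fun k => Part.some (R p k))).map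
    (fun k => toBits (N p) (G k * 2 ^ N p / 4 ^ k + e1 - e2))
  have hf : ∀ e1 e2, Partrec (f e1 e2) := by
    intro e1 e2
    refine Partrec.map (Partrec.rfind hR) ?_
    have hN1 : Computable (fun x : List Bool × ℕ => N x.1) := hN.comp Computable.fst
    exact (toBits_prim.to_comp).comp hN1 (csub (cadd (cdiv (cmul (hGc.comp Computable.snd)
      (cpow (Computable.const 2) hN1)) (cpow (Computable.const 4) Computable.snd)) (Computable.const e1)) (Computable.const e2))
  have hdom : ∀ e1 e2 p, (f e1 e2 p).Dom → p.length = J p + 1 + K * J p := by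
    intro e1 e2 p hp
    have hp' : (Nat.rfind (fun k => Part.some (R p k))).Dom := hp
    obtain ⟨k, hk, -⟩ := Nat.rfind_dom.1 hp'
    have := (Part.mem_some_iff.1 hk).symm
    simp only [R, Bool.and_eq_true, decide_eq_true_eq] at this
    exact this.1
  have hpf : ∀ e1 e2, PrefixFree {p | (f e1 e2 p).Dom} := by
    intro e1 e2 p hp q hq hpq
    have h1 := hdom e1 e2 p hp
    have h2 := hdom e1 e2 q hq
    have hJJ : J q = J p := by
      obtain ⟨t, rfl⟩ := hpq
      refine List.idxOf_append_of_mem ?_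
      rw [← List.idxOf_lt_length_iff]
      simp only [J] at h1
      omega
    refine hpq.eq_of_length ?_
    rw [h1, h2, hJJ]
  choose d hd using fun e1 e2 => hU ⟨f e1 e2, hf e1 e2, hpf e1 e2⟩
  refine ⟨1 + ((Finset.range (E+1)) ×ˢ (Finset.range (E+1))).sup (fun x => d x.1 x.2), fun j => ?_⟩
  set Ω := ∑' p : U.domain, (1/2 : ℝ) ^ (p : List Bool).length with hΩ
  have hsΩ := summable_half U h0
  have hΩ1 : Ω ≤ 1 := hsΩ.tsum_le_of_sum_le (kraft_finset U h0)
  have hΩ0 : 0 < Ω := by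
    obtain ⟨p, hp⟩ := exists_program hU []
    exact hsΩ.tsum_pos (fun _ => by positivity) ⟨p, hp.1⟩ (by positivity)
  set L := K * j with hLdef
  have h2L : (0:ℝ) < 2 ^ L := by positivity
  have hc1 : 0 < ⌈Ω * 2 ^ L⌉₊ := Nat.ceil_pos.2 (by positivity)
  have hc2 : ⌈Ω * 2 ^ L⌉₊ ≤ 2 ^ L := by
    rw [Nat.ceil_le]; push_cast; nlinarith
  obtain ⟨a, ha⟩ : ∃ a, ⌈Ω * 2 ^ L⌉₊ = a + 1 := ⟨_, (Nat.succ_pred_eq_of_pos hc1).symm⟩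
  have haL : a < 2 ^ L := by omega
  have ha1 : (a:ℝ) < Ω * 2 ^ L := by
    have := Nat.ceil_lt_add_one (show 0 ≤ Ω * 2 ^ L by positivity)
    rw [ha] at this; push_cast at this; linarith
  have ha2 : Ω * 2 ^ L ≤ a + 1 := by
    have := Nat.le_ceil (Ω * 2 ^ L)
    rw [ha] at this; exact_mod_cast this
  let p : List Bool := List.replicate j true ++ false :: toBits L a
  have hpJ : J p = j := by
    have : false ∉ List.replicate j true := by simp
    simp only [J, p]
    rw [List.idxOf_append_of_notMem this]
    simp
  have hpl : p.length = j + 1 + L := by simp [p, toBits_length]; omega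
  have hpv : val p % 2 ^ L = a := by
    have : p = (List.replicate j true ++ [false]) ++ toBits L a := by simp [p]
    rw [this, val_app, toBits_length, val_toBits, Nat.mul_add_mod_of_lt (Nat.mod_lt _ (by positivity)),
      Nat.mod_eq_of_lt haL]
  have hpN : N p = M * j + r := by simp only [N, hpJ]
  have hRiff : ∀ k, R p k = true ↔ M * j + r ≤ k ∧ (a:ℝ) / 2 ^ L < ∑ p ∈ F k, (1/2 : ℝ) ^ (p : List Bool).length := by
    intro k
    simp only [R, Bool.and_eq_true, decide_eq_true_eq, hpJ, hpN, ← hLdef, hpv, hpl, true_and]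
    refine and_congr_right fun _ => ?_
    have h2k : (0:ℝ) < 2 ^ k := by positivity
    rw [← Nat.cast_lt (α := ℝ), div_lt_iff₀ h2L]
    push_cast
    rw [hO k, mul_assoc, mul_comm (a:ℝ)]
    exact mul_lt_mul_iff_right₀ h2k
  obtain ⟨k0, hk0, hk0'⟩ := (((tendsto_partial hmono hexh hsΩ).eventually_const_lt
    (show (a:ℝ) / 2 ^ L < Ω by rwa [div_lt_iff₀ h2L])).and (eventually_ge_atTop (M * j + r))).exists
  have hgd : (Nat.rfind (fun k => Part.some (R p k))).Dom :=
    Nat.rfind_dom.2 ⟨k0, Part.mem_some_iff.2 ((hRiff k0).2 ⟨hk0', hk0⟩).symm, fun _ => trivial⟩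
  let k := (Nat.rfind (fun k => Part.some (R p k))).get hgd
  have hk : R p k = true := by
    have := Nat.rfind_spec (Part.get_mem hgd)
    exact (Part.mem_some_iff.1 this).symm
  obtain ⟨hk1, hk2⟩ := (hRiff k).1 hk
  obtain ⟨hE1, hE2⟩ := hE j k hk1 (by
    have : Ω ≤ ((a:ℝ) + 1) / 2 ^ L := by rwa [le_div_iff₀ h2L]
    rw [add_div] at this
    rw [one_div, inv_pow, ← one_div]
    linarith)
  set y := G k * 2 ^ (M * j + r) / 4 ^ k with hy
  set z := ⌊T * 2 ^ (M * j + r)⌋₊ with hz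
  have hfm : bits T (M * j + r) ∈ f (z - y) (y - z) p := by
    refine (Part.mem_map_iff _).2 ⟨k, Part.get_mem hgd, ?_⟩
    simp only [hpN]
    rw [bits_eq hT0, ← hy, ← hz]
    congr 1
    omega
  obtain ⟨p', hp', hU'⟩ := hd (z - y) (y - z) p hfm.1
  refine (H_le (hU' _ hfm)).trans (hp'.trans ?_)
  have hsup : d (z - y) (y - z) ≤ ((Finset.range (E+1)) ×ˢ (Finset.range (E+1))).sup (fun x => d x.1 x.2) :=
    Finset.le_sup (f := fun x : ℕ × ℕ => d x.1 x.2) (b := (z - y, y - z))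
      (by simp only [Finset.mem_product, Finset.mem_range]; omega)
  rw [hpl, hLdef, add_mul]
  omega

theorem compress_final (hD0 : 0 < D) (hD1 : D < 1) (h : ℕ → ℕ)
    (hc : ∀ M K : ℕ, 0 < K → K ≤ M → D * M < K → ∀ r, ∃ c : ℕ, ∀ j : ℕ, h (M * j + r) ≤ (K + 1) * j + c) :
    Filter.limsup (fun n : ℕ => (h n : ℝ) / n) atTop ≤ D := by
  refine le_of_forall_pos_le_add fun ε hε => ?_
  obtain ⟨M, hM⟩ := exists_nat_gt (max (4 / ε) (1 / (1 - D)))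
  have hM1 : 4 / ε < M := (le_max_left _ _).trans_lt hM
  have hM2 : 1 / (1 - D) < M := (le_max_right _ _).trans_lt hM
  have hM0 : (0:ℝ) < M := lt_trans (by positivity) hM1
  have hM0' : 0 < M := by exact_mod_cast hM0
  rw [div_lt_iff₀ (by linarith)] at hM2
  rw [div_lt_iff₀ hε] at hM1
  have hf1 := Nat.floor_le (show 0 ≤ D * M by positivity)
  have hf2 := Nat.lt_floor_add_one (D * M)
  have hKM : ⌊D * M⌋₊ + 1 ≤ M := by
    have : ((⌊D * M⌋₊ + 1 : ℕ) : ℝ) ≤ M := by push_cast; linarith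
    exact_mod_cast this
  choose c hc using hc M (⌊D * M⌋₊ + 1) (Nat.succ_pos _) hKM (by push_cast; exact hf2)
  set B := (Finset.range M).sup c with hB
  have hb : ∀ n : ℕ, 0 < n → (h n : ℝ) / n ≤ D + ε / 2 + B / n := by
    intro n hn
    have hn' : (0:ℝ) < n := by exact_mod_cast hn
    have h1 := hc (n % M) (n / M)
    rw [Nat.div_add_mod] at h1
    have h2 : c (n % M) ≤ B := Finset.le_sup (f := c) (Finset.mem_range.2 (Nat.mod_lt _ hM0'))
    have h3 : (h n : ℝ) ≤ (⌊D * M⌋₊ + 1 + 1) * (n / M : ℕ) + B := by exact_mod_cast h1.trans (by omega)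
    have h4 : ((n / M : ℕ) : ℝ) ≤ n / M := Nat.cast_div_le
    have h5 : (h n : ℝ) ≤ (D * M + 2) * (n / M) + B := by
      refine h3.trans (add_le_add_left (mul_le_mul ?_ h4 (by positivity) (by positivity)) _)
      linarith
    rw [div_le_iff₀ hn']
    have h6 : (D + ε / 2 + B / n) * n = D * n + ε / 2 * n + B := by field_simp
    rw [h6]
    refine h5.trans ?_
    have h7 : (D * M + 2) * ((n:ℝ) / M) = D * n + 2 / M * n := by field_simp
    rw [h7]
    have h8 : 2 / (M:ℝ) ≤ ε / 2 := by rw [div_le_div_iff₀ hM0 (by norm_num)]; linarith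
    have := mul_le_mul_of_nonneg_right h8 hn'.le
    linarith
  have ht : Tendsto (fun n : ℕ => (B:ℝ) / n) atTop (nhds 0) := tendsto_const_div_atTop_nhds_zero_nat _
  refine limsup_le_of_le ?_ ?_
  · exact IsBoundedUnder.isCoboundedUnder_le ⟨0, eventually_map.2 (Eventually.of_forall fun n => by positivity)⟩
  · filter_upwards [ht.eventually_lt_const (show (0:ℝ) < ε / 2 by positivity), eventually_gt_atTop 0] with n h1 h2
    have := hb n h2
    linarith
end

theorem W_converges_random_compressible (U : Computer) (hU : IsOptimal U)
    (Q D : ℝ) (hQpos : 0 < Q) (hQc : ComputableReal Q)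
    (hD0 : 0 < D) (hD1 : D < 1) (hDc : ComputableReal D) :
    Summable (wterm U Q D) ∧
    LeftComputable (∑' p, wterm U Q D p) ∧
    ChaitinRandom U D (∑' p, wterm U Q D p) ∧
    DCompressible U D (∑' p, wterm U Q D p) := by
  have h0 := nil_notMem hU
  obtain ⟨F, G, O, fresh, hGc, hOc, hfc, hmono, hexh, hf, hG, hO⟩ := data_exists U h0 hQpos hQc hD0 hDc
  have hs := summable_w U h0 Q hD0 hD1
  refine ⟨hs, left_comp hmono hexh hs hGc hG, ?_, ?_⟩
  · obtain ⟨d, hd⟩ := random_key hU hmono hexh hs hGc hfc hf hG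
    exact random_final hD0 hQpos _ d hd
  · exact compress_final hD0 hD1 _
      (fun M K hK hKM hDK r => compress_key hU hD0 hmono hexh hs hGc hOc hG hO hK hKM hDK r)
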